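/- arXiv:math/0611151 — 3 statements merged into one kernel-verified Lean document; each statement's English description precedes it below -/
import Mathlib

section
/- Let p be a prime with p ≡ 1 (mod 3), let L, M be positive integers with 4p = L² + 27M², and let q ≥ 5 be a prime with q ≠ p whose residue modulo 13 lies in {2, 3, 10, 11}. Then q^{(p−1)/3} ≡ −(L + 3M)·(6M)⁻¹ (mod p) if and only if there exists an integer t such that (t³ − 5t² − 9t + 5)·L ≡ (5t³ + 27t² − 45t − 27)·M (mod q). -/
namespace RuleF

section chars
variable {p : ℕ} [Fact p.Prime] {m : ℕ} {r : ZMod p}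

lemma cube_cases (hm : p = 3 * m + 1) (hr : r ^ 2 + r + 1 = 0) {x : ZMod p} (hx : x ≠ 0) :
    x ^ m = 1 ∨ x ^ m = r ∨ x ^ m = r ^ 2 := by
  have h1 : (x ^ m) ^ 3 = 1 := by
    rw [← pow_mul]
    have := ZMod.pow_card_sub_one_eq_one hx
    rwa [show p - 1 = m * 3 by omega] at this
  generalize x ^ m = y at *
  have : (y - 1) * ((y - r) * (y - r ^ 2)) = 0 := by
    have h2 : r ^ 3 = 1 := by linear_combination (r - 1) * hr
    linear_combination h1 + (y - y ^ 2) * hr + (y - 1) * h2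
  rcases mul_eq_zero.mp this with h | h
  · left; exact sub_eq_zero.mp h
  rcases mul_eq_zero.mp h with h | h
  · right; left; exact sub_eq_zero.mp h
  · right; right; exact sub_eq_zero.mp h

lemma three_ne (hm : p = 3 * m + 1) : (3 : ZMod p) ≠ 0 := by
  intro h
  have h3 : ((3 : ℕ) : ZMod p) = 0 := by exact_mod_cast h
  rw [ZMod.natCast_eq_zero_iff] at h3
  have hp := (Fact.out : p.Prime)
  have := (Nat.prime_dvd_prime_iff_eq hp Nat.prime_three).mp h3
  omega

lemma w_ne_one {R : Type*} [CommRing R] {w : R} (h3 : (3 : R) ≠ 0) (hw : w ^ 2 + w + 1 = 0) :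
    w ≠ 1 := by
  rintro rfl
  apply h3
  linear_combination hw

lemma w_sq_ne_one {R : Type*} [CommRing R] {w : R} (h3 : (3 : R) ≠ 0) (hw : w ^ 2 + w + 1 = 0) :
    w ^ 2 ≠ 1 := by
  intro h
  apply w_ne_one h3 hw
  have : w ^ 3 = 1 := by linear_combination (w - 1) * hw
  calc w = w * w ^ 2 := by rw [h, mul_one]
    _ = w ^ 3 := by ring
    _ = 1 := this

lemma w_ne_sq {R : Type*} [CommRing R] {w : R} (h3 : (3 : R) ≠ 0) (hw : w ^ 2 + w + 1 = 0) :
    w ≠ w ^ 2 := by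
  intro h
  apply w_ne_one h3 hw
  have : w ^ 3 = 1 := by linear_combination (w - 1) * hw
  calc w = w ^ 2 := h
    _ = w * w := by ring
    _ = w * w ^ 2 := by rw [← h]
    _ = w ^ 3 := by ring
    _ = 1 := this

open Classical in
/-- The cubic residue character with values powers of `w`. -/
noncomputable def chi (hm : p = 3 * m + 1) (hr : r ^ 2 + r + 1 = 0) {R : Type*} [CommRing R] (w : R)
    (hw : w ^ 2 + w + 1 = 0) : MulChar (ZMod p) R where
  toFun x := if x = 0 then 0 else if x ^ m = 1 then 1 else if x ^ m = r then w else w ^ 2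
  map_one' := by simp
  map_mul' := by
    intro x y
    by_cases hx : x = 0
    · simp [hx]
    by_cases hy : y = 0
    · simp [hy]
    have h1 := w_ne_one (three_ne hm) hr
    have h2 := w_sq_ne_one (three_ne hm) hr
    have h3 := w_ne_sq (three_ne hm) hr
    have hr3 : r ^ 3 = 1 := by linear_combination (r - 1) * hr
    have hr4 : r ^ 2 * r ^ 2 = r := by linear_combination r * hr3
    have hr5 : r ^ 2 * r = 1 := by linear_combination hr3
    have hr6 : r * r ^ 2 = 1 := by linear_combination hr3
    have hr7 : r * r = r ^ 2 := by ring
    have hw3 : w ^ 3 = 1 := by linear_combination (w - 1) * hw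
    have hw4 : w ^ 2 * w ^ 2 = w := by linear_combination w * hw3
    have hw5 : w ^ 2 * w = 1 := by linear_combination hw3
    have hw6 : w * w ^ 2 = 1 := by linear_combination hw3
    have hw7 : w * w = w ^ 2 := by ring
    rcases cube_cases hm hr hx with h | h | h <;> rcases cube_cases hm hr hy with h' | h' | h' <;>
      simp [hx, hy, mul_pow, h, h', h1, h2, h3.symm, hr4, hr5, hr6, hr7, hw4, hw5, hw6, hw7]
  map_nonunit' := by
    intro x hx
    have : x = 0 := by simpa using hx
    simp [this]

variable (hm : p = 3 * m + 1) (hr : r ^ 2 + r + 1 = 0)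

open Classical in
lemma chi_apply {R : Type*} [CommRing R] (w : R) (hw : w ^ 2 + w + 1 = 0) (x : ZMod p) :
    chi hm hr w hw x =
      if x = 0 then 0 else if x ^ m = 1 then 1 else if x ^ m = r then w else w ^ 2 := rfl

lemma chi_cases {R : Type*} [CommRing R] (w : R) (hw : w ^ 2 + w + 1 = 0) {x : ZMod p}
    (hx : x ≠ 0) :
    (x ^ m = 1 ∧ chi hm hr w hw x = 1) ∨ (x ^ m = r ∧ chi hm hr w hw x = w) ∨
    (x ^ m = r ^ 2 ∧ chi hm hr w hw x = w ^ 2) := by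
  have h1 := w_ne_one (three_ne hm) hr
  have h2 := w_sq_ne_one (three_ne hm) hr
  have h3 := w_ne_sq (three_ne hm) hr
  rcases cube_cases hm hr hx with h | h | h <;> simp [chi_apply, hx, h, h1, h2, h3.symm]

lemma chi_eq_w_iff {R : Type*} [CommRing R] [Nontrivial R] (h3 : (3 : R) ≠ 0) (w : R)
    (hw : w ^ 2 + w + 1 = 0) {x : ZMod p} (hx : x ≠ 0) :
    chi hm hr w hw x = w ↔ x ^ m = r := by
  have h1 := w_ne_one (three_ne hm) hr
  have h3' := w_ne_sq (three_ne hm) hr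
  have k1 := w_ne_one h3 hw
  have k3 := w_ne_sq h3 hw
  rcases chi_cases hm hr w hw hx with ⟨h, h'⟩ | ⟨h, h'⟩ | ⟨h, h'⟩
  · rw [h, h']; exact ⟨fun h => absurd h.symm k1, fun h => absurd h.symm h1⟩
  · simp [h, h']
  · rw [h, h']; exact ⟨fun h => absurd h.symm k3, fun h => absurd h.symm h3'⟩

lemma m_pos {p m : ℕ} [Fact p.Prime] (hm : p = 3 * m + 1) : 0 < m := by
  have := (Fact.out : p.Prime).two_le
  omega

lemma exists_noncube {p m : ℕ} [Fact p.Prime] (hm : p = 3 * m + 1) : ∃ x : ZMod p, x ≠ 0 ∧ x ^ m ≠ 1 := by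
  by_contra! hcon
  have h1 := FiniteField.sum_pow_lt_card_sub_one (ZMod p) m (by
    rw [ZMod.card]; have := m_pos hm; omega)
  have h2 : ∀ x : ZMod p, x ^ m = x ^ (p - 1) := by
    intro x
    by_cases hx : x = 0
    · subst hx
      have := m_pos hm
      rw [zero_pow (by omega), zero_pow (by omega)]
    · rw [hcon x hx, ZMod.pow_card_sub_one_eq_one hx]
  have h3 : ∀ x : ZMod p, x ^ m = 1 - if x = 0 then 1 else 0 := by
    intro x
    by_cases hx : x = 0
    · subst hx
      have := m_pos hm
      rw [zero_pow (by omega)]; simp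
    · simp [hx, hcon x hx]
  simp [h3] at h1

lemma chi_ne_one {R : Type*} [CommRing R] (h3 : (3 : R) ≠ 0) (w : R)
    (hw : w ^ 2 + w + 1 = 0) : chi hm hr w hw ≠ 1 := by
  intro hcon
  obtain ⟨x, hx, hx1⟩ := exists_noncube hm
  have : chi hm hr w hw x = 1 := by rw [hcon, MulChar.one_apply (by simpa using hx)]
  rcases chi_cases hm hr w hw hx with ⟨h, h'⟩ | ⟨h, h'⟩ | ⟨h, h'⟩
  · exact hx1 h
  · exact w_ne_one h3 hw (h'.symm.trans this)
  · exact w_sq_ne_one h3 hw (h'.symm.trans this)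

lemma chi_pow_three {R : Type*} [CommRing R] (w : R)
    (hw : w ^ 2 + w + 1 = 0) : chi hm hr w hw ^ 3 = 1 := by
  have hw3 : w ^ 3 = 1 := by linear_combination (w - 1) * hw
  ext x
  rw [MulChar.pow_apply_coe, MulChar.one_apply_coe]
  rcases chi_cases hm hr w hw x.ne_zero with ⟨h, h'⟩ | ⟨h, h'⟩ | ⟨h, h'⟩ <;> rw [h']
  · simp
  · exact hw3
  · rw [← pow_mul, mul_comm, pow_mul, hw3, one_pow]

lemma chi_neg_one {R : Type*} [CommRing R] (w : R)
    (hw : w ^ 2 + w + 1 = 0) : chi hm hr w hw (-1) = 1 := by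
  have h := congrArg (fun f => f (-1)) (chi_pow_three hm hr w hw)
  rw [MulChar.pow_apply' _ (by norm_num), ← map_pow, MulChar.one_apply (by simp)] at h
  rw [← h]; congr 1; norm_num

lemma chi_inv {R : Type*} [CommRing R] (w : R)
    (hw : w ^ 2 + w + 1 = 0) : (chi hm hr w hw)⁻¹ = chi hm hr w hw ^ 2 := by
  rw [inv_eq_iff_mul_eq_one, ← pow_succ', chi_pow_three]

lemma chi_orderOf {R : Type*} [CommRing R] (h3 : (3 : R) ≠ 0) (w : R)
    (hw : w ^ 2 + w + 1 = 0) : orderOf (chi hm hr w hw) = 3 :=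
  orderOf_eq_prime (chi_pow_three hm hr w hw) (chi_ne_one hm hr h3 w hw)

lemma jac_exists : ∃ A B : ℤ, ∀ (R : Type) [CommRing R] (w : R) (hw : w ^ 2 + w + 1 = 0),
    jacobiSum (chi hm hr w hw) (chi hm hr w hw) = A + B * w := by
  classical
  let a : ZMod p → ℤ := fun x =>
    if x = 0 then 0 else if x ^ m = 1 then 1 else if x ^ m = r then 0 else -1
  let b : ZMod p → ℤ := fun x =>
    if x = 0 then 0 else if x ^ m = 1 then 0 else if x ^ m = r then 1 else -1
  refine ⟨∑ x, (a x * a (1 - x) - b x * b (1 - x)),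
    ∑ x, (a x * b (1 - x) + b x * a (1 - x) - b x * b (1 - x)), ?_⟩
  intro R _ w hw
  have key : ∀ x, chi hm hr w hw x = a x + b x * w := by
    intro x
    rw [chi_apply]
    simp only [a, b]
    split_ifs
    · simp
    · simp
    · simp
    · push_cast; linear_combination hw
  rw [jacobiSum]
  push_cast
  rw [Finset.sum_mul, ← Finset.sum_add_distrib]
  refine Finset.sum_congr rfl fun x _ => ?_
  rw [key, key]
  linear_combination (b x * b (1 - x) : R) * hw

lemma jac_zmod : jacobiSum (chi hm hr r hr) (chi hm hr r hr) = 0 := by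
  have h1 : ∀ x, chi hm hr r hr x = x ^ m := by
    intro x
    by_cases hx : x = 0
    · subst hx
      rw [MulChar.map_zero, zero_pow (m_pos hm).ne']
    · rcases chi_cases hm hr r hr hx with ⟨h, h'⟩ | ⟨h, h'⟩ | ⟨h, h'⟩ <;> rw [h, h']
  rw [jacobiSum]
  simp_rw [h1, sub_eq_neg_add, add_pow, one_pow, mul_one, Finset.mul_sum]
  rw [Finset.sum_comm]
  refine Finset.sum_eq_zero fun j hj => ?_
  have hj' : j < m + 1 := Finset.mem_range.mp hj
  have : ∀ x : ZMod p, x ^ m * ((-x) ^ j * (m.choose j : ZMod p)) =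
      ((-1) ^ j * (m.choose j : ZMod p)) * x ^ (m + j) := by
    intro x
    rw [neg_pow]; ring
  simp_rw [this]
  rw [← Finset.mul_sum, FiniteField.sum_pow_lt_card_sub_one, mul_zero]
  rw [ZMod.card]
  have := m_pos hm
  omega

lemma jac_facts : ∃ A B : ℤ, (∀ (R : Type) [CommRing R] (w : R) (hw : w ^ 2 + w + 1 = 0),
    jacobiSum (chi hm hr w hw) (chi hm hr w hw) = A + B * w) ∧
    3 ∣ B ∧ A ^ 2 - A * B + B ^ 2 = p ∧ (A + B * r : ZMod p) = 0 := by
  obtain ⟨A, B, hAB⟩ := jac_exists hm hr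
  have h0 : (A + B * r : ZMod p) = 0 := by
    rw [← jac_zmod hm hr]; exact (hAB (ZMod p) r hr).symm
  obtain ⟨w, hprim⟩ : ∃ w : ℂ, IsPrimitiveRoot w 3 :=
    ⟨_, Complex.isPrimitiveRoot_exp 3 (by norm_num)⟩
  have hw : w ^ 2 + w + 1 = 0 := by
    have h1 := hprim.pow_eq_one
    have h2 := hprim.ne_one (by norm_num)
    apply mul_left_cancel₀ (sub_ne_zero.mpr h2)
    linear_combination h1
  have hw3 : w ^ 3 = 1 := hprim.pow_eq_one
  have hC := hAB ℂ w hw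
  have hind : ∀ a b : ℤ, (a + b * w : ℂ) = 0 → a = 0 ∧ b = 0 := by
    intro a b hab
    have h1 : (a ^ 2 - a * b + b ^ 2 : ℂ) = 0 := by
      linear_combination (a + b * w ^ 2) * hab + (- a * b) * hw - b ^ 2 * hw3
    have h2 : a ^ 2 - a * b + b ^ 2 = 0 := by exact_mod_cast h1
    have hb : b = 0 := by
      have : b ^ 2 = 0 := by nlinarith [sq_nonneg (2 * a - b), sq_nonneg b]
      exact pow_eq_zero_iff (by norm_num) |>.mp this
    subst hb
    have : a ^ 2 = 0 := by linarith
    exact ⟨pow_eq_zero_iff (by norm_num) |>.mp this, rfl⟩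
  refine ⟨A, B, hAB, ?_, ?_, h0⟩
  · obtain ⟨z, hz, hJ⟩ := exists_jacobiSum_eq_neg_one_add (n := 3) (by norm_num)
      (chi_pow_three hm hr w hw) (chi_pow_three hm hr w hw)
      (by rw [ZMod.card, hm]; simp) hprim
    have hz' : ∃ c d : ℤ, z = c + d * w := by
      clear hJ
      induction hz using Algebra.adjoin_induction with
      | mem x hx => exact ⟨0, 1, by simp at hx; simp [hx]⟩
      | algebraMap n => exact ⟨n, 0, by simp⟩
      | add x y _ _ hx hy =>
        obtain ⟨c, d, rfl⟩ := hx
        obtain ⟨c', d', rfl⟩ := hy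
        exact ⟨c + c', d + d', by push_cast; ring⟩
      | mul x y _ _ hx hy =>
        obtain ⟨c, d, rfl⟩ := hx
        obtain ⟨c', d', rfl⟩ := hy
        exact ⟨c * c' - d * d', c * d' + d * c' - d * d', by
          push_cast; linear_combination (d * d' : ℂ) * hw⟩
    obtain ⟨c, d, rfl⟩ := hz'
    have := (hind (A + 1 - 3 * d) (B + 3 * c - 3 * d) (by
      push_cast
      linear_combination hJ - hC + (c - 3 * d + d * w) * hw)).2
    exact ⟨d - c, by linarith⟩
  · have h3C : (3 : ℂ) ≠ 0 := by norm_num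
    have hne := chi_ne_one hm hr h3C w hw
    have hinv := chi_inv hm hr w hw
    have hne2 : chi hm hr w hw * chi hm hr w hw ≠ 1 := by
      rw [← sq, ← hinv]; simpa using hne
    have h1 := jacobiSum_mul_jacobiSum_inv (F := ZMod p) (F' := ℂ) (by
      rw [ringChar.eq_zero, ZMod.ringChar_zmod_n]; exact (NeZero.ne p).symm) hne hne hne2
    have hw' : (w ^ 2) ^ 2 + w ^ 2 + 1 = 0 := by linear_combination hw + w * hw3
    have h2 : (chi hm hr w hw)⁻¹ = chi hm hr (w ^ 2) hw' := by
      rw [hinv]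
      ext x
      rw [MulChar.pow_apply_coe, chi_apply, chi_apply]
      split_ifs <;> simp
    rw [h2, hC, hAB ℂ (w ^ 2) hw', ZMod.card] at h1
    have h4 : ((A ^ 2 - A * B + B ^ 2 : ℤ) : ℂ) = ((p : ℤ) : ℂ) := by
      push_cast
      rw [← h1]
      linear_combination (-(A * B)) * hw - B ^ 2 * hw3
    exact_mod_cast h4

end chars

section recip

/-- Identification of the Jacobi sum coefficients. -/
lemma ident {p : ℕ} [Fact p.Prime] {m : ℕ} (hm : p = 3 * m + 1) {L M A N : ℤ}
    (h : (4 * p : ℤ) = L ^ 2 + 27 * M ^ 2) (hM : M ≠ 0)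
    (hN : A ^ 2 - A * (3 * N) + (3 * N) ^ 2 = p) {r : ZMod p}
    (hr : (6 * M * r : ZMod p) = -(L + 3 * M)) (h0 : (A + (3 * N : ℤ) * r : ZMod p) = 0) :
    (2 * A - 3 * N = L ∧ N = M) ∨ (2 * A - 3 * N = -L ∧ N = -M) := by
  have hp := (Fact.out : p.Prime)
  have h4 : (4 * p : ℤ) = (2 * A - 3 * N) ^ 2 + 27 * N ^ 2 := by linear_combination -4 * hN
  generalize hL' : 2 * A - 3 * N = L' at *
  have hd : ((3 * (M * L' - N * L) : ℤ) : ZMod p) = 0 := by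
    rw [← hL']
    push_cast at h0 ⊢
    linear_combination 6 * M * h0 - 3 * N * hr
  have hd' : (p : ℤ) ∣ M * L' - N * L := by
    push_cast at hd
    have := (mul_eq_zero.mp hd).resolve_left (three_ne hm)
    rw [← ZMod.intCast_zmod_eq_zero_iff_dvd] 
    push_cast; exact this
  obtain ⟨k, hk⟩ := hd'
  have hppos : (0 : ℤ) < p := by exact_mod_cast hp.pos
  have hid : (L * L' + 27 * M * N) ^ 2 + 27 * (p * k) ^ 2 = 16 * (p : ℤ) ^ 2 := by
    rw [← hk]
    linear_combination (-4 * p) * h - (L ^ 2 + 27 * M ^ 2) * h4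
  have hk0 : k = 0 := by
    by_contra hne
    have : 1 ≤ k ^ 2 := by
      have := sq_pos_of_ne_zero hne
      omega
    nlinarith [sq_nonneg (L * L' + 27 * M * N), mul_pos hppos hppos]
  have he : M * L' = N * L := by rw [hk0] at hk; linarith
  have hsq : N ^ 2 = M ^ 2 := by
    have : (4 * p : ℤ) * N ^ 2 = 4 * p * M ^ 2 := by
      linear_combination N ^ 2 * h - M ^ 2 * h4 - (M * L' + N * L) * he
    have h4p : (4 * p : ℤ) ≠ 0 := by positivity
    exact mul_left_cancel₀ h4p this
  rcases sq_eq_sq_iff_eq_or_eq_neg.mp hsq with h1 | h1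
  · left
    refine ⟨mul_left_cancel₀ hM ?_, h1⟩
    rw [he, h1]
  · right
    refine ⟨mul_left_cancel₀ hM ?_, h1⟩
    rw [he, h1]; ring

variable {q : ℕ} [Fact q.Prime] {K : Type} [Field K] [CharP K q] {w : K}

lemma conj_pow (hw : w ^ 2 + w + 1 = 0) (L M : ℤ) :
    (q % 3 = 1 → ((L + M * (2 * w + 1) : K)) ^ q = L + M * (2 * w + 1)) ∧
    (q % 3 = 2 → ((L + M * (2 * w + 1) : K)) ^ q = L - M * (2 * w + 1)) := by
  have hw3 : w ^ 3 = 1 := by linear_combination (w - 1) * hw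
  have h1 : ((L + M * (2 * w + 1) : K)) ^ q = L + M * (2 * w ^ q + 1) := by
    have : (frobenius K q) (L + M * (2 * w + 1)) = L + M * (2 * w ^ q + 1) := by
      simp only [map_add, map_mul, map_intCast, map_one, frobenius_def, map_ofNat]
    simpa [frobenius_def] using this
  rw [h1, pow_eq_pow_mod q hw3]
  constructor
  · intro h; rw [h, pow_one]
  · intro h; rw [h]; linear_combination (2 * M : K) * hw

lemma recip [IsAlgClosed K] (hq5 : 5 ≤ q) {p : ℕ} [Fact p.Prime] (hqp : q ≠ p) {m : ℕ}
    (hm : p = 3 * m + 1) {L M : ℤ}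
    (h : (4 * p : ℤ) = L ^ 2 + 27 * M ^ 2) (hM : M ≠ 0) {r : ZMod p}
    (hr : r ^ 2 + r + 1 = 0)
    (hrM : (6 * M * r : ZMod p) = -(L + 3 * M)) (hw : w ^ 2 + w + 1 = 0) :
    (∀ n, q = 3 * n + 1 → ((L - (3 * M : ℤ) * (2 * w + 1) : K)) ^ n * chi hm hr w hw q =
      (L + (3 * M : ℤ) * (2 * w + 1)) ^ n) ∧
    (∀ n, q + 1 = 3 * n → ((L - (3 * M : ℤ) * (2 * w + 1) : K)) ^ n =
      chi hm hr w hw q * (L + (3 * M : ℤ) * (2 * w + 1)) ^ n) ∧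
    (L + (3 * M : ℤ) * (2 * w + 1) : K) ≠ 0 ∧ (L - (3 * M : ℤ) * (2 * w + 1) : K) ≠ 0 := by
  have hp := (Fact.out : p.Prime)
  have hqq := (Fact.out : q.Prime)
  have natne : ∀ l : ℕ, l.Prime → l ≠ q → (l : K) ≠ 0 := by
    intro l hl hlq h0
    rw [CharP.cast_eq_zero_iff K q] at h0
    exact hlq ((Nat.prime_dvd_prime_iff_eq hqq hl).mp h0).symm
  have h2K : (2 : K) ≠ 0 := by exact_mod_cast natne 2 Nat.prime_two (by omega)
  have h3K : (3 : K) ≠ 0 := by exact_mod_cast natne 3 Nat.prime_three (by omega)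
  have hpK : (p : K) ≠ 0 := natne p hp hqp.symm
  obtain ⟨A, B, hJ, ⟨N, rfl⟩, hnorm, h0⟩ := jac_facts hm hr
  have hid := ident hm h hM hnorm hrM h0
  obtain ⟨hc1, hc2⟩ := conj_pow (q := q) hw L (3 * M)
  set α : K := L + (3 * M : ℤ) * (2 * w + 1) with hα
  set β : K := L - (3 * M : ℤ) * (2 * w + 1) with hβ
  have hαβ : α * β = 4 * p := by
    have hc : ((4 * p : ℤ) : K) = ((L ^ 2 + 27 * M ^ 2 : ℤ) : K) := by rw [h]
    push_cast at hc
    rw [hα, hβ, hc]; push_cast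
    linear_combination (-36 * M ^ 2 : K) * hw
  have h4K : (4 : K) ≠ 0 := by
    have : (4 : K) = 2 * 2 := by norm_num
    rw [this]; exact mul_ne_zero h2K h2K
  have hα0 : α ≠ 0 := fun h' => mul_ne_zero h4K hpK (by rw [← hαβ, h', zero_mul])
  have hβ0 : β ≠ 0 := fun h' => mul_ne_zero h4K hpK (by rw [← hαβ, h', mul_zero])
  set χ := chi hm hr w hw with hχ
  obtain ⟨e, he, hJe⟩ : ∃ e : K, e ^ 2 = 1 ∧ 2 * jacobiSum χ χ = e * α := by
    rw [hJ K w hw]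
    rcases hid with ⟨h1, h2⟩ | ⟨h1, h2⟩
    · refine ⟨1, by ring, ?_⟩
      rw [hα, ← h1, ← h2]; push_cast; ring
    · refine ⟨-1, by ring, ?_⟩
      have h1' : L = -(2 * A - 3 * N) := by linarith
      have h2' : M = -N := by linarith
      rw [hα, h1', h2']; push_cast; ring
  have : NeZero (p : K) := ⟨hpK⟩
  obtain ⟨ζ, hζ⟩ := HasEnoughRootsOfUnity.exists_primitiveRoot K p
  obtain ⟨ψ, hψ⟩ : ∃ ψ : AddChar (ZMod p) K, ψ.IsPrimitive :=
    ⟨_, AddChar.zmodChar_primitive_of_primitive_root p hζ⟩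
  have hord := chi_orderOf hm hr h3K w hw
  have hne := chi_ne_one hm hr h3K w hw
  have hG3 := gaussSum_pow_eq_prod_jacobiSum (χ := χ) (ψ := ψ) (by rw [hord]; norm_num) hψ
  rw [hord, chi_neg_one, ZMod.card] at hG3
  simp at hG3
  have hGG := gaussSum_mul_gaussSum_pow_orderOf_sub_one hne hψ
  rw [hord, chi_neg_one, ZMod.card, one_mul] at hGG
  simp only [Nat.add_one_sub_one] at hGG
  have hfr := gaussSum_frob q χ ψ
  have hqu : IsUnit (q : ZMod p) := by
    rw [isUnit_iff_ne_zero, Ne, ZMod.natCast_eq_zero_iff]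
    intro hd
    exact hqp ((Nat.prime_dvd_prime_iff_eq hp hqq).mp hd).symm
  have hms : ∀ φ : MulChar (ZMod p) K, φ q * gaussSum φ (ψ ^ q) = gaussSum φ ψ := by
    intro φ
    rw [AddChar.pow_mulShift]
    simpa using gaussSum_mulShift φ ψ hqu.unit
  have hχ3 : χ (q : ZMod p) ^ 3 = 1 := by
    rw [← MulChar.pow_apply' _ (by norm_num), chi_pow_three, MulChar.one_apply hqu]
  have hodd : q % 2 = 1 := by
    rcases hqq.eq_two_or_odd with h' | h' <;> omega
  have h2q : (2 : K) ^ q = 2 := by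
    have : (frobenius K q) 2 = 2 := by simp only [map_ofNat]
    simpa [frobenius_def] using this
  have hGα : (2 * gaussSum χ ψ) ^ 3 = e * (α ^ 2 * β) := by
    rw [mul_pow, hG3]
    linear_combination 4 * p * hJe - e * α * hαβ
  refine ⟨?_, ?_, hα0, hβ0⟩
  · intro n hn
    obtain ⟨j, hj⟩ : ∃ j, n = 2 * j := ⟨n / 2, by omega⟩
    have hχq : χ ^ q = χ := by
      rw [hn, pow_succ, pow_mul, chi_pow_three, one_pow, one_mul]
    rw [hχq] at hfr
    have hms1 := hms χ
    rw [← hfr] at hms1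
    have hg0 : 2 * gaussSum χ ψ ≠ 0 :=
      mul_ne_zero h2K (left_ne_zero_of_mul (hGG.trans_ne hpK))
    have hen : e ^ n = 1 := by rw [hj, pow_mul, he, one_pow]
    have k1 : χ q * (2 * gaussSum χ ψ) ^ q = 2 * gaussSum χ ψ := by
      rw [mul_pow, h2q]; linear_combination 2 * hms1
    rw [hn, pow_succ, pow_mul, hGα, mul_pow, hen, one_mul] at k1
    have k2 : χ (q : ZMod p) * (α ^ 2 * β) ^ n = 1 := by
      apply mul_right_cancel₀ hg0
      rw [← hn] at k1
      linear_combination k1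
    have k3 : α ^ (3 * n) = 1 := by
      have := hc1 (by omega)
      rw [hn, pow_succ] at this
      exact mul_right_cancel₀ hα0 (by rw [this, one_mul])
    apply mul_left_cancel₀ (pow_ne_zero (2 * n) hα0)
    calc α ^ (2 * n) * (β ^ n * χ q) = χ q * (α ^ 2 * β) ^ n := by rw [mul_pow, ← pow_mul]; ring
      _ = α ^ (3 * n) := by rw [k2, k3]
      _ = α ^ (2 * n) * α ^ n := by rw [← pow_add]; congr 1; ring
  · intro n hn
    obtain ⟨j, hj⟩ : ∃ j, n = 2 * j := ⟨n / 2, by omega⟩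
    have hχq : χ ^ q = χ ^ 2 := by
      obtain ⟨i, hi⟩ : ∃ i, q = 3 * i + 2 := ⟨q / 3, by omega⟩
      rw [hi, pow_add, pow_mul, chi_pow_three, one_pow, one_mul]
    rw [hχq] at hfr
    have hms1 := hms (χ ^ 2)
    rw [← hfr, MulChar.pow_apply' _ (by norm_num)] at hms1
    have hen : e ^ n = 1 := by rw [hj, pow_mul, he, one_pow]
    have k1 : χ q ^ 2 * (2 * gaussSum χ ψ) ^ (q + 1) = α * β := by
      rw [pow_succ _ q, mul_pow, h2q, hαβ, ← hGG]; linear_combination 4 * gaussSum χ ψ * hms1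
    rw [hn, pow_mul, hGα, mul_pow, hen, one_mul] at k1
    have k3 : α ^ (3 * n) = α * β := by
      rw [← hn, pow_succ, hc2 (by omega)]; ring
    apply mul_left_cancel₀ (pow_ne_zero (2 * n) hα0)
    calc α ^ (2 * n) * β ^ n = (α ^ 2 * β) ^ n := by rw [mul_pow, ← pow_mul]
      _ = χ q * (χ q ^ 2 * (α ^ 2 * β) ^ n) := by linear_combination -(α ^ 2 * β) ^ n * hχ3
      _ = χ q * α ^ (3 * n) := by rw [k1, k3]
      _ = α ^ (2 * n) * (χ q * α ^ n) := by
        rw [show 3 * n = 2 * n + n by ring, pow_add]; ring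


/-- Cubes in the torus. -/
lemma torus [IsAlgClosed K] (hq5 : 5 ≤ q) (hw : w ^ 2 + w + 1 = 0) {y : K} (hy : y ≠ 0) {n : ℕ}
    (hn : q = 3 * n + 1 ∨ q + 1 = 3 * n) :
    y ^ n = 1 ↔ ∃ t : ℤ, y * (t + (2 * w + 1)) ^ 3 = (t - (2 * w + 1)) ^ 3 := by
  have hqq := (Fact.out : q.Prime)
  have natne : ∀ l : ℕ, l.Prime → l ≠ q → (l : K) ≠ 0 := by
    intro l hl hlq h0
    rw [CharP.cast_eq_zero_iff K q] at h0
    exact hlq ((Nat.prime_dvd_prime_iff_eq hqq hl).mp h0).symm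
  have h2K : (2 : K) ≠ 0 := by exact_mod_cast natne 2 Nat.prime_two (by omega)
  have h3K : (3 : K) ≠ 0 := by exact_mod_cast natne 3 Nat.prime_three (by omega)
  have hw3 : w ^ 3 = 1 := by linear_combination (w - 1) * hw
  have hconj := fun L M : ℤ => conj_pow (q := q) hw L M
  set s : K := 2 * w + 1 with hs
  have hs2 : s ^ 2 = -3 := by rw [hs]; linear_combination 4 * hw
  have hs0 : s ≠ 0 := by
    intro h0
    rw [h0] at hs2
    apply h3K
    linear_combination hs2
  constructor
  · intro hyn
    obtain ⟨v₀, hv₀⟩ := IsAlgClosed.exists_pow_nat_eq y (n := 3) (by norm_num)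
    obtain ⟨v, hv, hv1⟩ : ∃ v : K, v ^ 3 = y ∧ v ≠ 1 := by
      by_cases h1 : v₀ = 1
      · exact ⟨w, by rw [hw3, ← hv₀, h1, one_pow], w_ne_one h3K hw⟩
      · exact ⟨v₀, hv₀, h1⟩
    have hv0 : v ≠ 0 := by
      rintro rfl
      apply hy; rw [← hv]; norm_num
    have hv3n : v ^ (3 * n) = 1 := by rw [pow_mul, hv, hyn]
    have hv1' : 1 - v ≠ 0 := sub_ne_zero.mpr hv1.symm
    have ht : (s * (1 + v) / (1 - v)) ^ q = s * (1 + v) / (1 - v) := by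
      have e1 : (s * (1 + v) / (1 - v)) ^ q = s ^ q * (1 + v ^ q) / (1 - v ^ q) := by
        have : (frobenius K q) (s * (1 + v) / (1 - v)) = s ^ q * (1 + v ^ q) / (1 - v ^ q) := by
          simp only [map_div₀, map_add, map_sub, map_mul, map_one, frobenius_def]
        simpa only [frobenius_def] using this
      rw [e1]
      obtain ⟨c1, c2⟩ := hconj 0 1
      simp only [Int.cast_zero, Int.cast_one, one_mul, zero_add, zero_sub] at c1 c2
      rcases hn with hn | hn
      · rw [c1 (by omega)]
        have : v ^ q = v := by rw [hn, pow_succ, hv3n, one_mul]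
        rw [this]
      · rw [c2 (by omega)]
        have : v ^ q = v⁻¹ := by
          apply eq_inv_of_mul_eq_one_left
          rw [← pow_succ, hn, hv3n]
        rw [this]
        have hv2 : v - 1 ≠ 0 := sub_ne_zero.mpr hv1
        have hv3 : 1 - v⁻¹ ≠ 0 := by
          intro h0
          apply hv1
          have : v⁻¹ = 1 := (sub_eq_zero.mp h0).symm
          simpa using this
        rw [div_eq_div_iff hv3 hv1']
        field_simp
        ring
    rw [← Subfield.mem_bot_iff_pow_eq_self (F := K) (p := q)] at ht
    obtain ⟨t, ht⟩ : ∃ t : ℤ, (t : K) = s * (1 + v) / (1 - v) := by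
      rw [← ZMod.fieldRange_castHom_eq_bot q] at ht
      obtain ⟨z, hz⟩ := ht
      obtain ⟨t, rfl⟩ := ZMod.intCast_surjective z
      exact ⟨t, by simpa using hz⟩
    refine ⟨t, ?_⟩
    have e1 : (t + s : K) = 2 * s / (1 - v) := by rw [ht]; field_simp; ring
    have e2 : (t - s : K) = 2 * s * v / (1 - v) := by rw [ht]; field_simp; ring
    rw [e1, e2, ← hv]; field_simp
  · rintro ⟨t, ht⟩
    have h2s : 2 * s ≠ 0 := mul_ne_zero h2K hs0
    have hp0 : (t + s : K) ≠ 0 := by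
      intro h0
      rw [h0, zero_pow (by norm_num), mul_zero] at ht
      have := pow_eq_zero_iff (by norm_num) |>.mp ht.symm
      apply h2s; linear_combination h0 - this
    have hm0 : (t - s : K) ≠ 0 := by
      intro h0
      rw [h0, zero_pow (by norm_num)] at ht
      have := (mul_eq_zero.mp ht).resolve_left hy
      exact hp0 (pow_eq_zero_iff (by norm_num) |>.mp this)
    have hyv : y = ((t - s) / (t + s)) ^ 3 := by
      rw [div_pow, eq_div_iff (pow_ne_zero 3 hp0), ht]
    rw [hyv, ← pow_mul, div_pow, div_eq_one_iff_eq (pow_ne_zero _ hp0)]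
    obtain ⟨c1, c2⟩ := hconj t 1
    obtain ⟨d1, d2⟩ := hconj t (-1)
    simp only [Int.cast_neg, Int.cast_one, one_mul, neg_mul, ← sub_eq_add_neg, sub_neg_eq_add]
      at c1 c2 d1 d2
    rcases hn with hn | hn
    · have k1 := c1 (by omega)
      have k2 := d1 (by omega)
      rw [hn, pow_succ] at k1 k2
      rw [mul_right_cancel₀ hp0 (k1.trans (one_mul _).symm),
        mul_right_cancel₀ hm0 (k2.trans (one_mul _).symm)]
    · rw [← hn, pow_succ, pow_succ, c2 (by omega), d2 (by omega)]; ring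

end recip
end RuleF

/-- Rule (f) with the plus sign: for a prime `q ≥ 5`, `q ≡ ±2, ±3 (mod 13)`, `q ≠ p`,
`F_q(L,M) = ω` iff `(t³−5t²−9t+5)L ≡ (5t³+27t²−45t−27)M (mod q)` for some `t`. -/
theorem rule_f_plus (p : ℕ) (hp : p.Prime) (hp3 : p % 3 = 1)
    (L M : ℤ) (hL : 0 < L) (hM : 0 < M) (h : (4 * p : ℤ) = L ^ 2 + 27 * M ^ 2)
    (q : ℕ) (hq : q.Prime) (hq5 : 5 ≤ q) (hqp : q ≠ p)
    (hq13 : q % 13 ∈ ({2, 3, 10, 11} : Finset ℕ)) :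
    ((q : ZMod p) ^ ((p - 1) / 3) =
        ((-(L + 3 * M) : ℤ) : ZMod p) * (((6 * M : ℤ) : ZMod p))⁻¹) ↔
      ∃ t : ℤ, (t ^ 3 - 5 * t ^ 2 - 9 * t + 5) * L ≡
        (5 * t ^ 3 + 27 * t ^ 2 - 45 * t - 27) * M [ZMOD (q : ℤ)] := by
  have : Fact p.Prime := ⟨hp⟩
  have : Fact q.Prime := ⟨hq⟩
  have : Fact (Nat.Prime 13) := ⟨by norm_num⟩
  obtain ⟨m, hm⟩ : ∃ m, p = 3 * m + 1 := ⟨p / 3, by omega⟩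
  have hpm : (p - 1) / 3 = m := by omega
  rw [hpm]
  have hp5 : 5 ≤ p := by
    have := hp.two_le
    by_contra! hlt
    interval_cases p <;> revert hp <;> first | omega | norm_num
  -- the cube root of unity modulo `p`
  have h6M : ((6 * M : ℤ) : ZMod p) ≠ 0 := by
    intro h0
    rw [ZMod.intCast_zmod_eq_zero_iff_dvd] at h0
    rcases Int.Prime.dvd_mul' hp h0 with h1 | h1
    · have h6 : p ∣ 2 * 3 := by exact_mod_cast h1
      rcases (Nat.Prime.dvd_mul hp).mp h6 with h2 | h2
      · have := Nat.le_of_dvd (by norm_num) h2; omega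
      · have := Nat.le_of_dvd (by norm_num) h2; omega
    · have h2 := Int.le_of_dvd hM h1
      have h5 : (5 : ℤ) ≤ p := by exact_mod_cast hp5
      nlinarith [sq_nonneg L]
  set r : ZMod p := ((-(L + 3 * M) : ℤ) : ZMod p) * (((6 * M : ℤ) : ZMod p))⁻¹ with hrdef
  have hrM : (6 * M * r : ZMod p) = -(L + 3 * M) := by
    rw [hrdef]
    have : (6 * M : ZMod p) = ((6 * M : ℤ) : ZMod p) := by push_cast; rfl
    rw [this, mul_left_comm, mul_inv_cancel₀ h6M]
    push_cast; ring
  have hr : r ^ 2 + r + 1 = 0 := by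
    have hc : ((4 * p : ℤ) : ZMod p) = ((L ^ 2 + 27 * M ^ 2 : ℤ) : ZMod p) := by rw [h]
    push_cast at hc
    rw [ZMod.natCast_self, mul_zero] at hc
    apply (mul_eq_zero.mp (_ : ((6 * M : ℤ) : ZMod p) ^ 2 * (r ^ 2 + r + 1) = 0)).resolve_left
      (pow_ne_zero 2 h6M)
    push_cast
    linear_combination (6 * M * r - (L + 3 * M) + 6 * M) * hrM - hc
  -- the auxiliary field
  let K := AlgebraicClosure (ZMod q)
  have : CharP K q := charP_of_injective_algebraMap (algebraMap (ZMod q) K).injective q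
  have natne : ∀ l : ℕ, l.Prime → l ≠ q → (l : K) ≠ 0 := by
    intro l hl hlq h0
    rw [CharP.cast_eq_zero_iff K q] at h0
    exact hlq ((Nat.prime_dvd_prime_iff_eq hq hl).mp h0).symm
  have h2K : (2 : K) ≠ 0 := by exact_mod_cast natne 2 Nat.prime_two (by omega)
  have h3K : (3 : K) ≠ 0 := by exact_mod_cast natne 3 Nat.prime_three (by omega)
  have : NeZero ((3 : ℕ) : K) := ⟨by exact_mod_cast h3K⟩
  obtain ⟨w, hprim⟩ := HasEnoughRootsOfUnity.exists_primitiveRoot K 3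
  have hw : w ^ 2 + w + 1 = 0 := by
    have h1 := hprim.pow_eq_one
    have h2 := hprim.ne_one (by norm_num)
    apply mul_left_cancel₀ (sub_ne_zero.mpr h2)
    linear_combination h1
  -- reciprocity for `p` and for `13`
  have hq13' : q ≠ 13 := by rintro rfl; revert hq13; decide
  have h13 : (13 : ZMod 13) = 0 := ZMod.natCast_self 13
  have hr13 : (3 : ZMod 13) ^ 2 + 3 + 1 = 0 := by linear_combination h13
  obtain ⟨a1, a2, a3, a4⟩ := RuleF.recip (K := K) hq5 hqp hm h hM.ne' hr hrM hw
  obtain ⟨b1, b2, b3, b4⟩ := RuleF.recip (K := K) hq5 hq13' (m := 4) (by norm_num) (L := 5) (M := 1)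
    (by norm_num) (by norm_num) hr13 (by push_cast; linear_combination 2 * h13) hw
  have hq0 : (q : ZMod p) ≠ 0 := by
    rw [Ne, ZMod.natCast_eq_zero_iff]
    intro hd
    exact hqp ((Nat.prime_dvd_prime_iff_eq hp hq).mp hd).symm
  have hq0' : (q : ZMod 13) ≠ 0 := by
    rw [Ne, ZMod.natCast_eq_zero_iff]
    intro hd
    exact hq13' ((Nat.prime_dvd_prime_iff_eq (by norm_num) hq).mp hd).symm
  have hχ13 : RuleF.chi (p := 13) (m := 4) (by norm_num) hr13 w hw (q : ZMod 13) = w := by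
    rw [RuleF.chi_eq_w_iff _ _ h3K _ _ hq0']
    rw [← ZMod.natCast_mod q 13]
    simp only [Finset.mem_insert, Finset.mem_singleton] at hq13
    rcases hq13 with h' | h' | h' | h' <;> rw [h'] <;> push_cast
    · linear_combination h13
    · linear_combination 6 * h13
    · linear_combination 769 * h13
    · linear_combination 1126 * h13
  rw [hχ13] at b1 b2
  rw [← RuleF.chi_eq_w_iff hm hr h3K w hw hq0]
  generalize RuleF.chi hm hr w hw (q : ZMod p) = c at *
  obtain ⟨n, hn⟩ : ∃ n, q = 3 * n + 1 ∨ q + 1 = 3 * n := by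
    have : q % 3 ≠ 0 := by
      intro h0
      have := (Nat.prime_dvd_prime_iff_eq Nat.prime_three hq).mp (Nat.dvd_of_mod_eq_zero h0)
      omega
    rcases (by omega : q % 3 = 1 ∨ q % 3 = 2) with h' | h'
    · exact ⟨q / 3, by omega⟩
    · exact ⟨q / 3 + 1, by omega⟩
  have hs2 : (2 * w + 1) ^ 2 = -3 := by linear_combination 4 * hw
  have hs0 : 2 * w + 1 ≠ 0 := by
    intro h0
    rw [h0] at hs2
    apply h3K
    linear_combination hs2
  have htor := fun y hy => RuleF.torus (K := K) hq5 hw (y := y) hy hn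
  generalize 2 * w + 1 = s at *
  -- the congruence as an identity in the field
  have hcong : ∀ t : ℤ, ((t ^ 3 - 5 * t ^ 2 - 9 * t + 5) * L ≡
        (5 * t ^ 3 + 27 * t ^ 2 - 45 * t - 27) * M [ZMOD (q : ℤ)]) ↔
      (L + (3 * M : ℤ) * s) * ((5 : ℤ) - (3 * 1 : ℤ) * s) / 
        ((L - (3 * M : ℤ) * s) * ((5 : ℤ) + (3 * 1 : ℤ) * s)) * (t + s) ^ 3 =
        ((t : K) - s) ^ 3 := by
    intro t
    rw [div_mul_eq_mul_div, div_eq_iff (mul_ne_zero a4 b3), Int.modEq_comm, Int.modEq_iff_dvd,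
      ← CharP.intCast_eq_zero_iff K q]
    have h6s : 6 * s ≠ 0 := by
      have : (6 : K) = 2 * 3 := by norm_num
      rw [this]
      exact mul_ne_zero (mul_ne_zero h2K h3K) hs0
    rw [← sub_eq_zero (a := _ * (_ : K) ^ 3), ← mul_right_inj' h6s, mul_zero]
    push_cast
    have key : ∀ T l μ : K, (l + 3 * μ * s) * (5 - 3 * s) * (T + s) ^ 3 -
        (T - s) ^ 3 * ((l - 3 * μ * s) * (5 + 3 * s)) =
        - (6 * s * ((T ^ 3 - 5 * T ^ 2 - 9 * T + 5) * l -
          (5 * T ^ 3 + 27 * T ^ 2 - 45 * T - 27) * μ)) := by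
      intro T l μ
      linear_combination (2 * s * (5 * l - 27 * μ * T ^ 2 - 9 * μ * (s ^ 2 - 3) +
        3 * T * (15 * μ - 3 * l))) * hs2
    rw [key, neg_eq_zero]
  simp_rw [hcong]
  rw [← htor _ (div_ne_zero (mul_ne_zero a3 b4) (mul_ne_zero a4 b3)), div_pow,
    div_eq_one_iff_eq (pow_ne_zero _ (mul_ne_zero a4 b3)), mul_pow, mul_pow]
  generalize (L + (3 * M : ℤ) * s : K) = α at *
  generalize (L - (3 * M : ℤ) * s : K) = α' at *
  generalize ((5 : ℤ) + (3 * 1 : ℤ) * s : K) = β at *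
  generalize ((5 : ℤ) - (3 * 1 : ℤ) * s : K) = β' at *
  rcases hn with hn | hn
  · rw [← a1 n hn, ← b1 n hn]
    constructor
    · rintro rfl; ring
    · intro h'
      apply mul_left_cancel₀ (mul_ne_zero (pow_ne_zero n a4) (pow_ne_zero n b4))
      linear_combination h'
  · rw [a2 n hn, b2 n hn]
    constructor
    · rintro rfl; ring
    · intro h'
      apply mul_left_cancel₀ (mul_ne_zero (pow_ne_zero n a3) (pow_ne_zero n b3))
      linear_combination -h'
end

section
/- Let q be a prime. If q ≡ 1 or 6 (mod 7), then the polynomial X³ − 7X − 7 over ℤ/qℤ splits into a product of linear factors with three distinct roots; if q = 7, it has the triple root 0; and if q is not congruent to 0, 1, or 6 modulo 7, then X³ − 7X − 7 is irreducible over ℤ/qℤ. -/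
lemma aux_ne {F : Type*} [Field F] (h7 : (7:F) ≠ 0) (t : F) (hg : t^3+t^2-2*t-1=0) : 3*t+1 ≠ 0 := by
  intro h
  apply h7
  linear_combination (-27) * hg + (9*t^2+6*t-20) * h

/-- If `ζ` is a nontrivial 7th root of unity, `ζ + ζ⁻¹` is Frobenius-fixed iff `q ≡ ±1 mod 7`. -/
lemma aux_order {K : Type*} [Field K] (q : ℕ) [Fact q.Prime] [CharP K q] (h7 : (7:K) ≠ 0) (z : K)
    (hz : z^6+z^5+z^4+z^3+z^2+z+1=0) :
    (z + z⁻¹)^q = z + z⁻¹ ↔ (q % 7 = 1 ∨ q % 7 = 6) := by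
  have hz7 : z^7 = 1 := by linear_combination (z-1)*hz
  have hz1 : z ≠ 1 := by
    rintro rfl
    apply h7
    linear_combination hz
  have hz0 : z ≠ 0 := by
    rintro rfl
    simp at hz
  have ho : orderOf z = 7 := by
    have : Fact (Nat.Prime 7) := ⟨by norm_num⟩
    exact orderOf_eq_prime hz7 hz1
  have hq1 : 1 ≤ q := (Fact.out : q.Prime).one_le
  have hd1 : z^(q-1) = 1 ↔ q % 7 = 1 := by
    rw [← orderOf_dvd_iff_pow_eq_one, ho]; omega
  have hd2 : z^(q+1) = 1 ↔ q % 7 = 6 := by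
    rw [← orderOf_dvd_iff_pow_eq_one, ho]; omega
  rw [← hd1, ← hd2, add_pow_char, inv_pow]
  obtain ⟨m, rfl⟩ : ∃ m, q = m + 1 := ⟨q-1, by omega⟩
  have hm : z^m ≠ 0 := pow_ne_zero _ hz0
  have key : z^(m+1) + (z^(m+1))⁻¹ - (z + z⁻¹) = (z^m - 1) * (z^(m+1+1) - 1) / z^(m+1) := by
    field_simp
    ring
  rw [← sub_eq_zero, key, div_eq_zero_iff, mul_eq_zero, sub_eq_zero, sub_eq_zero]
  simp [hz0]

open Polynomial in
/-- The factorization behavior of `X³ − 7X − 7` modulo a prime `q`: it splits with three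
distinct roots when `q ≡ ±1 (mod 7)`, has `0` as a triple root when `q = 7`, and is
irreducible otherwise. -/
theorem cubic_seven_factorization (q : ℕ) (hq : q.Prime) :
    ((q % 7 = 1 ∨ q % 7 = 6) →
        ∃ a b c : ZMod q, a ≠ b ∧ a ≠ c ∧ b ≠ c ∧
          (X ^ 3 - 7 * X - 7 : (ZMod q)[X]) = (X - C a) * (X - C b) * (X - C c)) ∧
      (q = 7 → (X ^ 3 - 7 * X - 7 : (ZMod q)[X]).rootMultiplicity 0 = 3) ∧
      (¬ (q % 7 = 0 ∨ q % 7 = 1 ∨ q % 7 = 6) →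
        Irreducible (X ^ 3 - 7 * X - 7 : (ZMod q)[X])) := by
  have : Fact q.Prime := ⟨hq⟩
  have h7 : q % 7 ≠ 0 → (7 : ZMod q) ≠ 0 := by
    intro h h'
    have : ((7:ℕ) : ZMod q) = 0 := by exact_mod_cast h'
    rw [ZMod.natCast_eq_zero_iff] at this
    have := (Nat.prime_dvd_prime_iff_eq hq (by norm_num)).1 this
    subst this
    simp at h
  have h7K : q % 7 ≠ 0 → (7 : AlgebraicClosure (ZMod q)) ≠ 0 := by
    intro h h'
    apply h7 h
    apply (algebraMap (ZMod q) (AlgebraicClosure (ZMod q))).injective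
    simp only [map_ofNat, map_zero]
    exact h'
  have : CharP (AlgebraicClosure (ZMod q)) q :=
    charP_of_injective_algebraMap (algebraMap (ZMod q) _).injective q
  refine ⟨?_, ?_, ?_⟩
  · intro h
    have h0 : q % 7 ≠ 0 := by omega
    have hF := h7 h0
    have hK := h7K h0
    obtain ⟨z, hz⟩ : ∃ z : AlgebraicClosure (ZMod q), z^6+z^5+z^4+z^3+z^2+z+1=0 := by
      have hd : (X^6+X^5+X^4+X^3+X^2+X+1 : (AlgebraicClosure (ZMod q))[X]).degree = 6 := by
        compute_degree!
      obtain ⟨z, hz⟩ := IsAlgClosed.exists_root _ (by rw [hd]; norm_num)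
      exact ⟨z, by simpa [IsRoot] using hz⟩
    have hz0 : z ≠ 0 := by
      rintro rfl
      simp at hz
    have hfix := (aux_order q hK z hz).2 h
    obtain ⟨t, ht⟩ : ∃ t : ZMod q, algebraMap (ZMod q) (AlgebraicClosure (ZMod q)) t = z + z⁻¹ := by
      obtain ⟨n, hn⟩ := (mem_bot_iff_intCast q _).1
        ((Subfield.mem_bot_iff_pow_eq_self (AlgebraicClosure (ZMod q)) q).2 hfix)
      exact ⟨n, by rw [map_intCast, hn]⟩
    have hg : t^3+t^2-2*t-1=0 := by
      apply (algebraMap (ZMod q) (AlgebraicClosure (ZMod q))).injective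
      simp only [map_sub, map_add, map_mul, map_pow, ht, map_one, map_zero, map_ofNat]
      field_simp
      linear_combination hz
    refine ⟨t^2+2*t-1, t^2-t-2, 3-t-2*t^2, ?_, ?_, ?_, ?_⟩
    · intro h
      exact aux_ne hF t hg (by linear_combination h)
    · intro h
      exact aux_ne hF (1-t-t^2) (by linear_combination (-t^3-2*t^2+t+1) * hg) (by linear_combination -h)
    · intro h
      exact aux_ne hF (t^2-2) (by linear_combination (t^3-t^2-2*t+1) * hg) (by linear_combination h)
    · have hC : (C t)^3 + (C t)^2 - 2 * C t - 1 = (0 : (ZMod q)[X]) := by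
        have := congrArg C hg
        simpa only [map_sub, map_add, map_mul, map_pow, map_one, map_ofNat, map_zero] using this
      simp only [map_sub, map_add, map_mul, map_pow, map_one, map_ofNat]
      linear_combination (3 * C t * X + (-2*(C t)^3 - (C t)^2 + 9 * C t + 1)) * hC
  · rintro rfl
    have : (X ^ 3 - 7 * X - 7 : (ZMod 7)[X]) = (X - C 0)^3 := by
      have : (7 : (ZMod 7)[X]) = 0 := by
        have : (7 : ZMod 7) = 0 := by rfl
        simpa only [map_ofNat, map_zero] using congrArg C this
      simp [this]
    rw [this, rootMultiplicity_X_sub_C_pow]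
  · intro h
    have h0 : q % 7 ≠ 0 := by omega
    have hK := h7K h0
    have hd : (X ^ 3 - 7 * X - 7 : (ZMod q)[X]).natDegree = 3 := by compute_degree!
    rw [irreducible_iff_roots_eq_zero_of_degree_le_three (by omega) (by omega)]
    rw [Multiset.eq_zero_iff_forall_notMem]
    intro r hr
    have hr := isRoot_of_mem_roots hr
    have hr : r^3-7*r-7=0 := by simpa [IsRoot] using hr
    obtain ⟨t, ht⟩ : ∃ t, t = r^2-r-5 := ⟨_, rfl⟩
    have hg : t^3+t^2-2*t-1=0 := by
      rw [ht]
      linear_combination (r^3-3*r^2-4*r+13) * hr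
    obtain ⟨T, hT⟩ : ∃ T, T = algebraMap (ZMod q) (AlgebraicClosure (ZMod q)) t := ⟨_, rfl⟩
    have hTg : T^3+T^2-2*T-1=0 := by
      have := congrArg (algebraMap (ZMod q) (AlgebraicClosure (ZMod q))) hg
      simpa only [hT, map_sub, map_add, map_mul, map_pow, map_one, map_ofNat, map_zero] using this
    have hTq : T^q = T := by
      rw [hT, ← map_pow, ZMod.pow_card]
    obtain ⟨z, hz⟩ : ∃ z : AlgebraicClosure (ZMod q), z^2-T*z+1=0 := by
      have hd : (X^2-C T*X+1 : (AlgebraicClosure (ZMod q))[X]).degree = 2 := by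
        compute_degree!
      obtain ⟨z, hz⟩ := IsAlgClosed.exists_root _ (by rw [hd]; norm_num)
      exact ⟨z, by simpa [IsRoot] using hz⟩
    have hz0 : z ≠ 0 := by
      rintro rfl
      simp at hz
    have hTz : T = z + z⁻¹ := by
      field_simp
      linear_combination -hz
    have hz6 : z^6+z^5+z^4+z^3+z^2+z+1=0 := by
      rw [hTz] at hTg
      field_simp at hTg
      linear_combination hTg
    rw [hTz] at hTq
    have := (aux_order q hK z hz6).1 hTq
    omega
end

section
/- Let K = ℚ(ζ) be the third cyclotomic field with ζ a primitive cube root of unity in its ring of integers 𝒪_K = ℤ[ζ], let q ≠ 3 be a rational prime, and let a, b be integers such that (q : 𝒪_K) is coprime to α := a + b·ζ in 𝒪_K. Then there exists λ ∈ 𝒪_K and integers a′, b′ with λ = a′ + b′·ζ, 3 ∣ b′, λ prime in 𝒪_K, and q dividing λ − α in 𝒪_K. -/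
/-! ### Part A : theta functions -/
open Filter Topology Asymptotics in
def RapidTo (F : ℝ → ℂ) (c : ℂ) : Prop := ∀ r : ℝ, (fun x => F x - c) =O[atTop] (fun x : ℝ => x ^ r)

section Rapid
open Filter Topology Asymptotics

lemma RapidTo.const_mul {F : ℝ → ℂ} {c : ℂ} (h : RapidTo F c) (k : ℂ) :
    RapidTo (fun x => k * F x) (k * c) := by
  intro r
  simpa [mul_sub] using (h r).const_mul_left k

lemma RapidTo.sum {ι : Type*} {F : ι → ℝ → ℂ} {c : ι → ℂ} {s : Finset ι}
    (h : ∀ i ∈ s, RapidTo (F i) (c i)) :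
    RapidTo (fun x => ∑ i ∈ s, F i x) (∑ i ∈ s, c i) := by
  intro r
  have := IsBigO.fun_sum (A := fun i x => F i x - c i) (s := s) (fun i hi => h i hi r)
  simpa [Finset.sum_sub_distrib] using this

lemma RapidTo.mul {F G : ℝ → ℂ} {c d : ℂ} (hF : RapidTo F c) (hG : RapidTo G d) :
    RapidTo (fun x => F x * G x) (c * d) := by
  intro r
  have h1 := ((hF r).mul (hG 0))
  have h2 := (hG r).const_mul_left c
  have h3 := (hF r).const_mul_left d
  simp only [Real.rpow_zero, mul_one] at h1
  refine ((h1.add h2).add h3).congr_left (fun x => ?_)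
  ring

lemma RapidTo.scale {F : ℝ → ℂ} {c : ℂ} (hF : RapidTo F c) {k : ℝ} (hk : 0 < k) :
    RapidTo (fun x => F (k * x)) c := by
  intro r
  have h := (hF r).comp_tendsto (tendsto_id.const_mul_atTop hk)
  refine h.trans ?_
  refine (((isBigO_refl (fun x : ℝ => x ^ r) atTop).const_mul_left (k ^ r))).congr' ?_
    EventuallyEq.rfl
  filter_upwards [eventually_gt_atTop 0] with x hx
  simp [Real.mul_rpow hk.le hx.le]

end Rapid

open HurwitzZeta in
lemma rapid_even (a : UnitAddCircle) :
    RapidTo (fun x => (evenKernel a x : ℂ)) (if a = 0 then 1 else 0) :=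
  fun r => (hurwitzEvenFEPair a).hf_top r

open HurwitzZeta in
lemma rapid_cos (a : UnitAddCircle) :
    RapidTo (fun x => (cosKernel a x : ℂ)) 1 :=
  fun r => (hurwitzEvenFEPair a).hg_top r

/-- The Eisenstein norm form. -/
def eisN (a b : ℤ) : ℤ := a ^ 2 - a * b + b ^ 2

/-- the finite index set -/
def thIdx (M : ℕ) : Finset (ℕ × ℕ) := Finset.range M ×ˢ Finset.range (2 * M)

noncomputable def thA (M : ℕ) (r : ℕ × ℕ) : ℝ := (2 * (r.1 : ℝ) - r.2) / (2 * M)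
noncomputable def thB (M : ℕ) (r : ℕ × ℕ) : ℝ := (r.2 : ℝ) / (2 * M)

open HurwitzZeta in
noncomputable def thF (φ : ℤ → ℤ → ℂ) (M : ℕ) (t : ℝ) : ℂ :=
  ∑ r ∈ thIdx M, φ r.1 r.2 *
    ((evenKernel (thA M r) t : ℂ) * (evenKernel (thB M r) (3 * t) : ℂ))

open HurwitzZeta in
noncomputable def thG (φ : ℤ → ℤ → ℂ) (M : ℕ) (t : ℝ) : ℂ :=
  ∑ r ∈ thIdx M, φ r.1 r.2 *
    ((cosKernel (thA M r) t : ℂ) * (cosKernel (thB M r) (3⁻¹ * t) : ℂ))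

open HurwitzZeta in
lemma thF_term_hasSum (M : ℕ) (hM : 0 < M) (r : ℕ × ℕ) {t : ℝ} (ht : 0 < t) :
    HasSum (fun p : ℤ × ℤ => (Real.exp (-Real.pi *
        ((eisN (r.1 + M * (p.1 + p.2)) (r.2 + 2 * M * p.2) : ℝ) / M ^ 2) * t) : ℂ))
      ((evenKernel (thA M r) t : ℂ) * (evenKernel (thB M r) (3 * t) : ℂ)) := by
  have h1 := hasSum_int_evenKernel (thA M r) ht
  have h2 := hasSum_int_evenKernel (thB M r) (t := 3 * t) (by positivity)
  have h3 := h1.mul h2 (h1.summable.mul_of_nonneg h2.summable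
    (fun _ => (Real.exp_pos _).le) (fun _ => (Real.exp_pos _).le))
  rw [← Complex.hasSum_ofReal, Complex.ofReal_mul] at h3
  convert! h3 using 2 with p
  rw [← Real.exp_add]
  congr 2
  have : (M : ℝ) ≠ 0 := by positivity
  simp only [eisN, thA, thB]
  push_cast
  field_simp
  ring

lemma thF_hasSum (φ : ℤ → ℤ → ℂ) (M : ℕ) (hM : 0 < M)
    (hφ : ∀ a b i j : ℤ, φ (a + M * i) (b + M * j) = φ a b) {t : ℝ} (ht : 0 < t) :
    HasSum (fun x : ℤ × ℤ => φ x.1 x.2 *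
      Real.exp (-Real.pi * ((eisN x.1 x.2 : ℝ) / M ^ 2) * t)) (thF φ M t) := by
  classical
  set f : ℤ × ℤ → ℂ := fun x => φ x.1 x.2 *
      Real.exp (-Real.pi * ((eisN x.1 x.2 : ℝ) / M ^ 2) * t) with hf
  let g : ℕ × ℕ → ℤ × ℤ → ℤ × ℤ := fun r p => (r.1 + M * (p.1 + p.2), r.2 + 2 * M * p.2)
  have hM' : (M : ℤ) ≠ 0 := by positivity
  have ginj : ∀ r, Function.Injective (g r) := by
    rintro r ⟨i, j⟩ ⟨i', j'⟩ h
    simp only [g, Prod.mk.injEq, add_right_inj] at h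
    obtain ⟨h1, h2⟩ := h
    have hj : j = j' := mul_left_cancel₀ (by positivity) h2
    have := mul_left_cancel₀ hM' h1
    ext <;> simp <;> omega
  have grange : ∀ r ∈ thIdx M, ∀ x : ℤ × ℤ, x ∈ Set.range (g r) ↔
      r = ((x.1 % M).toNat, (x.2 % (2 * M)).toNat) := by
    intro r hr x
    simp only [thIdx, Finset.mem_product, Finset.mem_range] at hr
    constructor
    · rintro ⟨p, rfl⟩
      simp only [g, Int.add_mul_emod_self_left]
      rw [Int.emod_eq_of_lt (by positivity) (by exact_mod_cast hr.1),
        Int.emod_eq_of_lt (by positivity) (by exact_mod_cast hr.2)]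
      simp
    · intro h
      refine ⟨(x.1 / M - x.2 / (2 * M), x.2 / (2 * M)), ?_⟩
      have e1 := Int.emod_nonneg x.1 hM'
      have e2 := Int.emod_nonneg x.2 (b := 2 * (M : ℤ)) (by positivity)
      have e3 := Int.emod_add_mul_ediv x.1 M
      have e4 := Int.emod_add_mul_ediv x.2 (2 * M)
      rw [h]
      simp only [g, Int.toNat_of_nonneg e1, Int.toNat_of_nonneg e2]
      ext <;> simp [e3, e4]
  have key : ∀ r ∈ thIdx M, HasSum (fun x : ℤ × ℤ => if r = ((x.1 % M).toNat, (x.2 % (2 * M)).toNat)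
      then f x else 0) (φ r.1 r.2 * ((HurwitzZeta.evenKernel (thA M r) t : ℂ) *
        (HurwitzZeta.evenKernel (thB M r) (3 * t) : ℂ))) := by
    intro r hr
    rw [← (ginj r).hasSum_iff]
    · convert! (thF_term_hasSum M hM r ht).mul_left (φ r.1 r.2) using 2 with p
      rw [Function.comp_apply, if_pos ((grange r hr _).1 ⟨p, rfl⟩)]
      simp only [hf, g]
      rw [show (r.2 : ℤ) + 2 * M * p.2 = r.2 + M * (2 * p.2) by ring, hφ]
    · intro x hx
      rw [grange r hr] at hx
      simp [hx]
  have := hasSum_sum key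
  convert! this using 2 with x
  have e1 := Int.emod_nonneg x.1 hM'
  have e2 := Int.emod_nonneg x.2 (b := 2 * (M : ℤ)) (by positivity)
  have e3 := Int.emod_lt_of_pos x.1 (b := (M : ℤ)) (by positivity)
  have e4 := Int.emod_lt_of_pos x.2 (b := 2 * (M : ℤ)) (by positivity)
  rw [Finset.sum_ite_eq', if_pos]
  simp only [thIdx, Finset.mem_product, Finset.mem_range]
  omega

open HurwitzZeta in
lemma thF_feq (φ : ℤ → ℤ → ℂ) (M : ℕ) {x : ℝ} (hx : 0 < x) :
    thF φ M (1 / x) = ((1 / Real.sqrt 3 : ℝ) * ((x ^ (1 : ℝ) : ℝ) : ℂ)) • thG φ M x := by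
  simp only [thF, thG, smul_eq_mul, Finset.mul_sum]
  refine Finset.sum_congr rfl fun r _ => ?_
  rw [evenKernel_functional_equation, evenKernel_functional_equation]
  have e1 : 1 / (1 / x) = x := by field_simp
  have e2 : 1 / (3 * (1 / x)) = 3⁻¹ * x := by field_simp
  have e3 : (1 / (1 / x) ^ (1 / 2 : ℝ)) * (1 / (3 * (1 / x)) ^ (1 / 2 : ℝ))
      = 1 / Real.sqrt 3 * x ^ (1 : ℝ) := by
    rw [← Real.sqrt_eq_rpow, ← Real.sqrt_eq_rpow, Real.rpow_one, Real.sqrt_mul (by norm_num),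
      Real.sqrt_div zero_le_one, Real.sqrt_one]
    have h1 : Real.sqrt x * Real.sqrt x = x := Real.mul_self_sqrt hx.le
    have h2 : Real.sqrt x ≠ 0 := by positivity
    have h3 : Real.sqrt 3 ≠ 0 := by positivity
    field_simp
    nlinarith
  rw [e1, e2, ← Complex.ofReal_mul (1 / Real.sqrt 3), ← e3]
  push_cast
  ring

open HurwitzZeta in
lemma thA_thB_zero (M : ℕ) (hM : 0 < M) (r : ℕ × ℕ) (hr : r ∈ thIdx M)
    (h1 : (thA M r : UnitAddCircle) = 0) (h2 : (thB M r : UnitAddCircle) = 0) : r = (0, 0) := by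
  simp only [thIdx, Finset.mem_product, Finset.mem_range] at hr
  have hM' : (M : ℝ) ≠ 0 := by positivity
  rw [AddCircle.coe_eq_zero_iff] at h1 h2
  obtain ⟨n, hn⟩ := h1
  obtain ⟨k, hk⟩ := h2
  simp only [zsmul_eq_mul, mul_one, thA, thB] at hn hk
  field_simp at hn hk
  have hk' : (k : ℤ) * (2 * M) = r.2 := by
    have : ((k * (2 * M) : ℤ) : ℝ) = ((r.2 : ℤ) : ℝ) := by push_cast; linarith
    exact_mod_cast this
  have hn' : (n : ℤ) * (2 * M) = 2 * r.1 - r.2 := by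
    have : ((n * (2 * M) : ℤ) : ℝ) = ((2 * r.1 - r.2 : ℤ) : ℝ) := by push_cast; linarith
    exact_mod_cast this
  have hM2 : (0 : ℤ) < M := by exact_mod_cast hM
  have k0 : k = 0 := by
    have a1 : 0 ≤ k := by
      by_contra h
      nlinarith
    have a2 : k < 1 := by
      by_contra h
      nlinarith [hr.2]
    omega
  subst k0
  have hr2 : r.2 = 0 := by omega
  have n0 : n = 0 := by
    have a1 : 0 ≤ n := by
      by_contra h
      nlinarith
    have a2 : n < 1 := by
      by_contra h
      nlinarith [hr.1]
    omega
  subst n0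
  ext <;> simp <;> omega

open HurwitzZeta MeasureTheory Set in
noncomputable def thPair (φ : ℤ → ℤ → ℂ) (M : ℕ) (hM : 0 < M) (h0 : φ 0 0 = 0) : WeakFEPair ℂ where
  f := thF φ M
  g := thG φ M
  k := 1
  ε := (1 / Real.sqrt 3 : ℝ)
  f₀ := 0
  g₀ := ∑ r ∈ thIdx M, φ r.1 r.2
  hf_int := by
    refine ContinuousOn.locallyIntegrableOn ?_ measurableSet_Ioi
    refine continuousOn_finsetSum _ fun r _ => continuousOn_const.mul ?_
    refine (Complex.continuous_ofReal.comp_continuousOn (continuousOn_evenKernel _)).mul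
      (Complex.continuous_ofReal.comp_continuousOn
        ((continuousOn_evenKernel _).comp (by fun_prop) ?_))
    intro x hx
    simpa using hx
  hg_int := by
    refine ContinuousOn.locallyIntegrableOn ?_ measurableSet_Ioi
    refine continuousOn_finsetSum _ fun r _ => continuousOn_const.mul ?_
    refine (Complex.continuous_ofReal.comp_continuousOn (continuousOn_cosKernel _)).mul
      (Complex.continuous_ofReal.comp_continuousOn
        ((continuousOn_cosKernel _).comp (by fun_prop) ?_))
    intro x hx
    simpa using hx
  hk := one_pos
  hε := by
    have : Real.sqrt 3 ≠ 0 := by positivity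
    simpa using this
  h_feq := fun x hx => thF_feq φ M hx
  hf_top := by
    have h : RapidTo (thF φ M) 0 := by
      have := RapidTo.sum (s := thIdx M) (fun r _ => ((rapid_even (thA M r)).mul
        ((rapid_even (thB M r)).scale (k := 3) (by norm_num))).const_mul (φ r.1 r.2))
      convert! this using 1
      symm
      refine Finset.sum_eq_zero fun r hr => ?_
      by_cases h1 : (thA M r : UnitAddCircle) = 0
      · by_cases h2 : (thB M r : UnitAddCircle) = 0
        · have := thA_thB_zero M hM r hr h1 h2
          subst this
          simp [h0]
        · simp [h2]
      · simp [h1]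
    exact h
  hg_top := by
    have h : RapidTo (thG φ M) (∑ r ∈ thIdx M, φ r.1 r.2) := by
      have := RapidTo.sum (s := thIdx M) (fun r _ => ((rapid_cos (thA M r)).mul
        ((rapid_cos (thB M r)).scale (k := 3⁻¹) (by norm_num))).const_mul (φ r.1 r.2))
      simp only [mul_one] at this
      exact this
    exact h

lemma eisN_pos {a b : ℤ} (h : (a, b) ≠ (0, 0)) : 0 < eisN a b := by
  unfold eisN
  by_contra hc
  apply h
  have h1 : 4 * (a ^ 2 - a * b + b ^ 2) = (2 * a - b) ^ 2 + 3 * b ^ 2 := by ring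
  have hb : b = 0 := by
    have : b ^ 2 = 0 := by nlinarith [sq_nonneg (2 * a - b), sq_nonneg b]
    exact pow_eq_zero_iff two_ne_zero |>.1 this
  subst hb
  have : a = 0 := by
    have : a ^ 2 = 0 := by nlinarith [sq_nonneg a]
    exact pow_eq_zero_iff two_ne_zero |>.1 this
  simp [this]

lemma eisN_nonneg (a b : ℤ) : 0 ≤ eisN a b := by
  unfold eisN; nlinarith [sq_nonneg (2 * a - b), sq_nonneg b]

lemma eisN_summable {σ : ℝ} (hσ : 1 < σ) :
    Summable (fun x : ℤ × ℤ => 1 / ((eisN x.1 x.2 : ℝ)) ^ σ) := by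
  have h := EisensteinSeries.summable_one_div_norm_rpow (k := 2 * σ) (by linarith)
  rw [← (finTwoArrowEquiv ℤ).symm.summable_iff] at h
  refine Summable.of_nonneg_of_le (fun x => ?_) (fun x => ?_) (h.mul_left (4 ^ σ))
  · have : (0 : ℝ) ≤ eisN x.1 x.2 := by exact_mod_cast eisN_nonneg _ _
    positivity
  · by_cases hx : x = (0, 0)
    · subst hx
      simp only [eisN]
      simp [Real.zero_rpow (by linarith : σ ≠ 0)]
      positivity
    · have hN : (0 : ℝ) < eisN x.1 x.2 := by exact_mod_cast eisN_pos hx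
      set v := (finTwoArrowEquiv ℤ).symm x with hv
      have hle : ‖v‖ ^ 2 ≤ 4 * eisN x.1 x.2 := by
        have hs : ‖v‖ ≤ Real.sqrt (4 * eisN x.1 x.2) := by
          rw [pi_norm_le_iff_of_nonneg (Real.sqrt_nonneg _)]
          intro i
          apply Real.le_sqrt_of_sq_le
          rw [Int.norm_eq_abs, sq_abs]
          have a1 : x.1 ^ 2 ≤ 4 * eisN x.1 x.2 := by
            unfold eisN; nlinarith [sq_nonneg (x.1 - 2 * x.2), sq_nonneg x.1]
          have a2 : x.2 ^ 2 ≤ 4 * eisN x.1 x.2 := by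
            unfold eisN; nlinarith [sq_nonneg (2 * x.1 - x.2), sq_nonneg x.2]
          fin_cases i
          · simp [hv]; exact_mod_cast a1
          · simp [hv]; exact_mod_cast a2
        calc ‖v‖ ^ 2 ≤ Real.sqrt (4 * eisN x.1 x.2) ^ 2 := by gcongr
          _ = _ := Real.sq_sqrt (by positivity)
      have hv0 : 0 < ‖v‖ := by
        rw [norm_pos_iff]
        intro h0
        apply hx
        have := congrArg (finTwoArrowEquiv ℤ) h0
        simp [hv] at this
        simpa using this
      have h3 : ‖v‖ ^ (2 * σ) ≤ 4 ^ σ * (eisN x.1 x.2 : ℝ) ^ σ := by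
        rw [Real.rpow_mul hv0.le, ← Real.mul_rpow (by norm_num) hN.le]
        apply Real.rpow_le_rpow (by positivity) _ (by linarith)
        exact_mod_cast hle
      simp only [Function.comp_apply, ← hv]
      rw [Real.rpow_neg hv0.le, ← div_eq_mul_inv, div_le_div_iff₀ (by positivity) (by positivity)]
      simpa using h3

theorem partA (φ : ℤ → ℤ → ℂ) (M : ℕ) (hM : 0 < M)
    (hφ : ∀ a b i j : ℤ, φ (a + M * i) (b + M * j) = φ a b) (h0 : φ 0 0 = 0)
    (hb : ∀ a b, ‖φ a b‖ ≤ 1) :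
    ∃ H : ℂ → ℂ, Differentiable ℂ H ∧ H (-1) = 0 ∧
      (∃ κ : ℂ, κ ≠ 0 ∧ H 1 = κ * ∑ r ∈ thIdx M, φ r.1 r.2) ∧
      ∀ s : ℂ, 1 < s.re → HasSum (fun x : ℤ × ℤ => φ x.1 x.2 / (eisN x.1 x.2 : ℂ) ^ s)
        (H s / (s - 1)) := by
  have hM' : (M : ℂ) ≠ 0 := by exact_mod_cast hM.ne'
  have hpi : (Real.pi : ℂ) ≠ 0 := by exact_mod_cast Real.pi_ne_zero
  let P := thPair φ M hM h0
  let c : ℂ := (1 / Real.sqrt 3 : ℝ)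
  have hc : c ≠ 0 := P.hε
  let S := ∑ r ∈ thIdx M, φ r.1 r.2
  have hMsq : ((M : ℂ) ^ 2) ≠ 0 := pow_ne_zero 2 hM'
  refine ⟨fun s => (Real.pi : ℂ) ^ s * ((M : ℂ) ^ 2) ^ (-s) * (Complex.Gamma s)⁻¹ *
    ((s - 1) * P.Λ₀ s + c * S), ?_, ?_, ⟨Real.pi * ((M : ℂ) ^ 2)⁻¹ * c, ?_, ?_⟩, ?_⟩
  · have h1 : Differentiable ℂ fun s : ℂ => (Real.pi : ℂ) ^ s :=
      differentiable_id.const_cpow (Or.inl hpi)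
    have h2 : Differentiable ℂ fun s : ℂ => ((M : ℂ) ^ 2) ^ (-s) :=
      differentiable_id.neg.const_cpow (Or.inl hMsq)
    have h3 := Complex.differentiable_one_div_Gamma
    have h4 := P.differentiable_Λ₀
    fun_prop
  · have : Complex.Gamma (-1) = 0 := by simpa using Complex.Gamma_neg_nat_eq_zero 1
    simp [this]
  · exact mul_ne_zero (mul_ne_zero hpi (inv_ne_zero hMsq)) hc
  · simp [Complex.cpow_neg_one, S]
    ring
  · intro s hs
    have hs0 : 0 < s.re := by linarith
    have hG : Complex.Gamma s ≠ 0 := Complex.Gamma_ne_zero_of_re_pos hs0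
    have hs1 : s - 1 ≠ 0 := by
      intro h
      have : s = 1 := by linear_combination h
      rw [this] at hs
      simp at hs
    have hmel : mellin (thF φ M) s = P.Λ s := by
      have := (P.hasMellin (s := s) hs).2
      have e : (fun x => P.f x - P.f₀) = thF φ M := by
        ext x
        change thF φ M x - 0 = _
        simp
      rwa [e] at this
    have hΛ : P.Λ s = P.Λ₀ s + c * S / (s - 1) := by
      simp only [WeakFEPair.Λ]
      change P.Λ₀ s - (1 / s) • (0 : ℂ) - (c / ((1 : ℝ) - s)) • S = _
      have : (1 : ℂ) - s ≠ 0 := by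
        intro h
        apply hs1
        linear_combination -h
      simp only [smul_eq_mul, Complex.ofReal_one]
      field_simp
      ring
    have key := hasSum_mellin_pi_mul (a := fun x : ℤ × ℤ => φ x.1 x.2)
      (q := fun x : ℤ × ℤ => (eisN x.1 x.2 : ℝ) / M ^ 2) (F := thF φ M) (s := s) ?_ hs0
      (fun t ht => thF_hasSum φ M hM hφ ht) ?_
    · rw [hmel, hΛ] at key
      have k2 := key.mul_left ((Real.pi : ℂ) ^ s * ((M : ℂ) ^ 2) ^ (-s) * (Complex.Gamma s)⁻¹)
      convert! k2 using 1
      · ext x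
        have e1 : ((((eisN x.1 x.2 : ℝ) / M ^ 2 : ℝ)) : ℂ) ^ s =
            (eisN x.1 x.2 : ℂ) ^ s / ((M : ℂ) ^ 2) ^ s := by
          have hn : (0 : ℝ) ≤ (eisN x.1 x.2 : ℝ) := by exact_mod_cast eisN_nonneg _ _
          have := Complex.div_cpow_ofReal_nonneg hn (sq_nonneg (M : ℝ)) s
          push_cast at this ⊢
          exact this
        have hq : ((M : ℂ) ^ 2) ^ s ≠ 0 := by
          rw [Ne, Complex.cpow_eq_zero_iff]; tauto
        have hp : (Real.pi : ℂ) ^ s ≠ 0 := by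
          rw [Ne, Complex.cpow_eq_zero_iff]; tauto
        rw [e1, Complex.cpow_neg, Complex.cpow_neg]
        field_simp
      · simp only
        field_simp
    · intro x
      by_cases hx : x = (0, 0)
      · left; subst hx; exact h0
      · right
        have : (0 : ℝ) < eisN x.1 x.2 := by exact_mod_cast eisN_pos hx
        positivity
    · have hsum := (eisN_summable hs).mul_left (((M : ℝ) ^ 2) ^ s.re)
      refine Summable.of_nonneg_of_le (fun x => ?_) (fun x => ?_) hsum
      · have : (0 : ℝ) ≤ eisN x.1 x.2 := by exact_mod_cast eisN_nonneg _ _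
        positivity
      · have hn : (0 : ℝ) ≤ eisN x.1 x.2 := by exact_mod_cast eisN_nonneg _ _
        rw [Real.div_rpow hn (by positivity), div_div_eq_mul_div, mul_one_div]
        gcongr
        exact mul_le_of_le_one_left (by positivity) (hb _ _)

/-! ### Part B : arithmetic on ideals -/
section PartB
open NumberField

variable {K : Type*} [Field K] [NumberField K]

/-- the ideals of given norm -/
noncomputable def nI (K : Type*) [Field K] [NumberField K] (n : ℕ) : Finset (Ideal (𝓞 K)) :=
  (Ideal.finite_setOfPred_absNorm_eq (S := 𝓞 K) n).toFinset

lemma mem_nI {n : ℕ} {I : Ideal (𝓞 K)} : I ∈ nI K n ↔ Ideal.absNorm I = n := by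
  simp [nI]

lemma idiv_finite {I : Ideal (𝓞 K)} (hI : I ≠ 0) : {J : Ideal (𝓞 K) | J ∣ I}.Finite := by
  have : Fintype {J : Ideal (𝓞 K) // J ∣ I} :=
    UniqueFactorizationMonoid.fintypeSubtypeDvd I hI
  have h2 : Finite {J : Ideal (𝓞 K) // J ∣ I} := Finite.of_fintype _
  exact Set.finite_coe_iff.1 h2

open Classical in
/-- divisors of a nonzero ideal -/
noncomputable def idiv (I : Ideal (𝓞 K)) : Finset (Ideal (𝓞 K)) :=
  if h : I ≠ 0 then (idiv_finite h).toFinset else ∅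

lemma mem_idiv {I J : Ideal (𝓞 K)} (hI : I ≠ 0) : J ∈ idiv I ↔ J ∣ I := by
  rw [idiv, dif_pos hI]
  simp

open Classical in
/-- von Mangoldt function on ideals -/
noncomputable def vM (I : Ideal (𝓞 K)) : ℝ :=
  if h : ∃ P : Ideal (𝓞 K), Prime P ∧ ∃ k : ℕ, 0 < k ∧ P ^ k = I
  then Real.log (Ideal.absNorm h.choose) else 0

lemma vM_pow {P : Ideal (𝓞 K)} (hP : Prime P) {k : ℕ} (hk : 0 < k) :
    vM (P ^ k) = Real.log (Ideal.absNorm P) := by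
  have h : ∃ Q : Ideal (𝓞 K), Prime Q ∧ ∃ j : ℕ, 0 < j ∧ Q ^ j = P ^ k := ⟨P, hP, k, hk, rfl⟩
  rw [vM, dif_pos h]
  obtain ⟨hQ, j, hj, hjk⟩ := h.choose_spec
  rw [eq_of_prime_pow_eq hQ hP hj hjk]

lemma vM_eq_zero {I : Ideal (𝓞 K)}
    (h : ¬ ∃ P : Ideal (𝓞 K), Prime P ∧ ∃ k : ℕ, 0 < k ∧ P ^ k = I) : vM I = 0 := by
  rw [vM, dif_neg h]

lemma absNorm_pos {I : Ideal (𝓞 K)} (hI : I ≠ 0) : 0 < Ideal.absNorm I :=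
  Nat.pos_of_ne_zero (by rwa [Ne, Ideal.absNorm_eq_zero_iff])

lemma vM_nonneg (I : Ideal (𝓞 K)) : 0 ≤ vM I := by
  by_cases h : ∃ P : Ideal (𝓞 K), Prime P ∧ ∃ k : ℕ, 0 < k ∧ P ^ k = I
  · obtain ⟨P, hP, k, hk, rfl⟩ := h
    rw [vM_pow hP hk]
    exact Real.log_natCast_nonneg _
  · rw [vM_eq_zero h]

lemma sum_vM (I : Ideal (𝓞 K)) : I ≠ 0 → ∑ J ∈ idiv I, vM J = Real.log (Ideal.absNorm I) := by
  classical
  induction I using UniqueFactorizationMonoid.induction_on_prime with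
  | h₁ => exact fun h => absurd rfl h
  | h₂ I hI =>
    intro h
    have : I = 1 := by simpa using hI
    subst this
    simp only [map_one, Nat.cast_one, Real.log_one]
    refine Finset.sum_eq_zero fun J hJ => vM_eq_zero ?_
    rintro ⟨P, hP, k, hk, rfl⟩
    rw [mem_idiv h] at hJ
    exact hP.not_isUnit (isUnit_of_dvd_one ((dvd_pow_self P hk.ne').trans hJ))
  | h₃ I P hI hP ih =>
    intro h
    have ih := ih hI
    have hsub : idiv I ⊆ idiv (P * I) := by
      intro J hJ
      rw [mem_idiv hI] at hJ
      rw [mem_idiv h]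
      exact hJ.mul_left P
    rw [← Finset.sum_sdiff hsub, ih, map_mul, Nat.cast_mul, Real.log_mul
      (by exact_mod_cast (absNorm_pos hP.ne_zero).ne') (by exact_mod_cast (absNorm_pos hI).ne')]
    congr 1
    obtain ⟨c, hc, hcP⟩ := (FiniteMultiplicity.of_prime_left hP hI).exists_eq_pow_mul_and_not_dvd
    set v := multiplicity P I
    rw [Finset.sum_eq_single (P ^ (v + 1)), vM_pow hP (Nat.succ_pos v)]
    · intro J hJ hne
      apply vM_eq_zero
      rintro ⟨Q, hQ, k, hk, rfl⟩
      rw [Finset.mem_sdiff, mem_idiv h, mem_idiv hI] at hJ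
      by_cases hQP : Q = P
      · subst hQP
        rcases lt_trichotomy k (v + 1) with hk' | hk' | hk'
        · exact hJ.2 (hc ▸ (pow_dvd_pow Q (by omega)).mul_right c)
        · exact hne (by rw [hk'])
        · apply hcP
          have h1 : Q ^ (v + 2) ∣ Q * I := (pow_dvd_pow Q (by omega)).trans hJ.1
          rw [hc, ← mul_assoc, ← pow_succ', pow_succ Q (v + 1)] at h1
          exact (mul_dvd_mul_iff_left (pow_ne_zero _ hQ.ne_zero)).1 h1
      · apply hJ.2
        apply hQ.pow_dvd_of_dvd_mul_left k _ hJ.1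
        intro hd
        exact hQP (associated_iff_eq.1 ((hQ.dvd_prime_iff_associated hP).1 hd))
    · intro hn
      exfalso
      apply hn
      rw [Finset.mem_sdiff, mem_idiv h, mem_idiv hI]
      constructor
      · rw [hc, ← mul_assoc, ← pow_succ']
        exact Dvd.intro _ rfl
      · intro hd
        apply hcP
        rw [hc, pow_succ] at hd
        exact (mul_dvd_mul_iff_left (pow_ne_zero _ hP.ne_zero)).1 hd

lemma vM_le {I : Ideal (𝓞 K)} (hI : I ≠ 0) : vM I ≤ Real.log (Ideal.absNorm I) := by
  rw [← sum_vM I hI]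
  exact Finset.single_le_sum (fun J _ => vM_nonneg J) ((mem_idiv hI).2 dvd_rfl)

/-- coefficients of the Dirichlet series of a function on ideals -/
noncomputable def co (f : Ideal (𝓞 K) → ℂ) : ArithmeticFunction ℂ :=
  ⟨fun n => if n = 0 then 0 else ∑ I ∈ nI K n, f I, by simp⟩

lemma co_apply (f : Ideal (𝓞 K) → ℂ) {n : ℕ} (hn : n ≠ 0) : co f n = ∑ I ∈ nI K n, f I := by
  simp [co, hn]

lemma co_one (f : Ideal (𝓞 K) → ℂ) : co f 1 = f 1 := by
  rw [co_apply f one_ne_zero]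
  have : nI K 1 = {1} := by
    ext I
    simp [mem_nI, Ideal.absNorm_eq_one_iff]
  simp [this]

lemma co_log (ψ : Ideal (𝓞 K) →*₀ ℂ) (n : ℕ) :
    co ψ n * Real.log n = (co ψ * co (fun J => ψ J * vM J)) n := by
  classical
  rcases eq_or_ne n 0 with rfl | hn
  · simp
  have hne : ∀ I ∈ nI K n, I ≠ 0 := by
    intro I hI h0
    rw [mem_nI] at hI
    subst h0
    simp at hI
    omega
  have lhs : co ψ n * Real.log n = ∑ p ∈ (nI K n).sigma (fun I => idiv I), ψ p.1 * vM p.2 := by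
    rw [co_apply _ hn, Finset.sum_mul, Finset.sum_sigma]
    refine Finset.sum_congr rfl fun I hI => ?_
    simp only
    rw [← Finset.mul_sum, ← Complex.ofReal_sum, sum_vM I (hne I hI), mem_nI.1 hI]
  have rhs : (co ψ * co (fun J => ψ J * vM J)) n =
      ∑ p ∈ (n.divisorsAntidiagonal).sigma (fun de => nI K de.1 ×ˢ nI K de.2),
        ψ (p.2.1 * p.2.2) * vM p.2.2 := by
    rw [ArithmeticFunction.mul_apply, Finset.sum_sigma]
    refine Finset.sum_congr rfl fun de hde => ?_
    have := Nat.ne_zero_of_mem_divisorsAntidiagonal hde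
    rw [co_apply _ this.1, co_apply _ this.2, Finset.sum_mul_sum, Finset.sum_product]
    simp only [map_mul, mul_assoc]
  rw [lhs, rhs]
  symm
  refine Finset.sum_bij (fun p _ => ⟨p.2.1 * p.2.2, p.2.2⟩) ?_ ?_ ?_ ?_
  · rintro ⟨⟨d, e⟩, ⟨I, J⟩⟩ hp
    simp only [Finset.mem_sigma, Nat.mem_divisorsAntidiagonal, Finset.mem_product, mem_nI] at hp ⊢
    obtain ⟨⟨hde, -⟩, hI, hJ⟩ := hp
    have h1 : Ideal.absNorm (I * J) = n := by rw [map_mul, hI, hJ, hde]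
    exact ⟨h1, (mem_idiv (hne _ (mem_nI.2 h1))).2 (Dvd.intro_left I rfl)⟩
  · rintro ⟨⟨d, e⟩, ⟨I, J⟩⟩ hp ⟨⟨d', e'⟩, ⟨I', J'⟩⟩ hp' h
    simp only [Finset.mem_sigma, Nat.mem_divisorsAntidiagonal, Finset.mem_product, mem_nI] at hp hp'
    simp only [Sigma.mk.injEq, heq_eq_eq] at h
    obtain ⟨h1, h2⟩ := h
    subst h2
    have hJ0 : J ≠ 0 := by
      intro h0
      subst h0
      simp at hp
      obtain ⟨⟨a, b⟩, c, d⟩ := hp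
      subst d
      simp at a
      omega
    have hI : I = I' := mul_right_cancel₀ hJ0 h1
    subst hI
    obtain ⟨-, rfl, rfl⟩ := hp
    obtain ⟨-, rfl, rfl⟩ := hp'
    rfl
  · rintro ⟨I, J⟩ hp
    simp only [Finset.mem_sigma] at hp
    have hJ := (mem_idiv (hne I hp.1)).1 hp.2
    obtain ⟨L, rfl⟩ := hJ
    have hn' := mem_nI.1 hp.1
    refine ⟨⟨(Ideal.absNorm L, Ideal.absNorm J), (L, J)⟩, ?_, ?_⟩
    · simp only [Finset.mem_sigma, Nat.mem_divisorsAntidiagonal, Finset.mem_product, mem_nI]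
      refine ⟨⟨?_, hn⟩, by simp⟩
      rw [← hn', map_mul, mul_comm]
    · simp [mul_comm]
  · intros
    rfl

lemma co_hasSum {f : Ideal (𝓞 K) → ℂ} {s V : ℂ} (hs : s ≠ 0)
    (h : HasSum (fun I => f I / (Ideal.absNorm I : ℂ) ^ s) V) :
    LSeriesHasSum (co f) s V := by
  have h2 := h.tsum_fiberwise (fun I => Ideal.absNorm I)
  rw [LSeriesHasSum]
  convert! h2 using 2 with n
  have e : (fun I : Ideal (𝓞 K) => Ideal.absNorm I) ⁻¹' {n} = (nI K n : Set (Ideal (𝓞 K))) := by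
    ext I; simp [mem_nI]
  rw [e, Finset.tsum_subtype' (nI K n) (fun I => f I / (Ideal.absNorm I : ℂ) ^ s)]
  rcases eq_or_ne n 0 with rfl | hn
  · rw [LSeries.term_zero]
    symm
    refine Finset.sum_eq_zero fun I hI => ?_
    rw [mem_nI.1 hI]
    simp [Complex.zero_cpow hs]
  · rw [LSeries.term_of_ne_zero hn, co_apply f hn, Finset.sum_div]
    exact Finset.sum_congr rfl fun I hI => by rw [mem_nI.1 hI]

end PartB

/-! ### Part C : nonvanishing and logarithmic derivatives -/
section PartC
open NumberField Filter Topology ComplexOrder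

/-- `Λ` is the logarithmic derivative of `f`. -/
def IsLogDer (f Λ : ArithmeticFunction ℂ) : Prop := ∀ n : ℕ, f n * Real.log n = (f * Λ) n

lemma IsLogDer.mul {f g Λ M : ArithmeticFunction ℂ} (hf : IsLogDer f Λ) (hg : IsLogDer g M) :
    IsLogDer (f * g) (Λ + M) := by
  intro n
  have e : (f * g) * (Λ + M) = (f * Λ) * g + f * (g * M) := by ring
  rw [e, ArithmeticFunction.add_apply, ArithmeticFunction.mul_apply, ArithmeticFunction.mul_apply,
    ArithmeticFunction.mul_apply (f := f) (g := g * M), Finset.sum_mul, ← Finset.sum_add_distrib]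
  refine Finset.sum_congr rfl fun de hde => ?_
  have h0 := Nat.ne_zero_of_mem_divisorsAntidiagonal hde
  have h1 := (Nat.mem_divisorsAntidiagonal.1 hde).1
  rw [← hf, ← hg, ← h1, Nat.cast_mul, Real.log_mul (by exact_mod_cast h0.1)
    (by exact_mod_cast h0.2)]
  push_cast
  ring

lemma IsLogDer.nonneg {f Λ : ArithmeticFunction ℂ} (hf : IsLogDer f Λ) (hΛ : ∀ n, 0 ≤ Λ n)
    (h1 : f 1 = 1) (n : ℕ) : 0 ≤ f n := by
  have hΛ1 : Λ 1 = 0 := by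
    have := hf 1
    simpa [h1] using this.symm
  induction n using Nat.strong_induction_on with
  | _ n ih =>
    rcases Nat.lt_or_ge n 2 with hn | hn
    · interval_cases n
      · simp
      · rw [h1]; exact zero_le_one
    have hlog : 0 < Real.log n := Real.log_pos (by exact_mod_cast hn)
    have key : 0 ≤ f n * Real.log n := by
      rw [hf n, ArithmeticFunction.mul_apply]
      refine Finset.sum_nonneg fun de hde => ?_
      have h0 := Nat.ne_zero_of_mem_divisorsAntidiagonal hde
      have h2 := (Nat.mem_divisorsAntidiagonal.1 hde).1
      by_cases he : de.2 = 1
      · simp [he, hΛ1]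
      · refine mul_nonneg (ih _ ?_) (hΛ _)
        have : 2 ≤ de.2 := by omega
        have := Nat.pos_of_ne_zero h0.1
        nlinarith
    have e : f n = (f n * Real.log n) * ((Real.log n)⁻¹ : ℝ) := by
      rw [mul_assoc, ← Complex.ofReal_mul, mul_inv_cancel₀ hlog.ne']
      simp
    rw [e]
    exact mul_nonneg key (by exact_mod_cast (inv_pos.2 hlog).le)

lemma dslope_differentiable {H : ℂ → ℂ} (hH : Differentiable ℂ H) (c : ℂ) :
    Differentiable ℂ (dslope H c) := by
  rw [← differentiableOn_univ, Complex.differentiableOn_dslope univ_mem]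
  exact hH.differentiableOn

lemma dslope_mul {H : ℂ → ℂ} {c : ℂ} (h : H c = 0) {s : ℂ} : H s = (s - c) * dslope H c s := by
  have := sub_smul_dslope H c s
  rw [h, sub_zero] at this
  simpa using this.symm

variable {K : Type*} [Field K] [NumberField K]

lemma IsLogDer.co (ψ : Ideal (𝓞 K) →*₀ ℂ) : IsLogDer (co ψ) (co (fun J => ψ J * vM J)) :=
  co_log ψ

/-- complex conjugate of a character -/
noncomputable def cj (ψ : Ideal (𝓞 K) →*₀ ℂ) : Ideal (𝓞 K) →*₀ ℂ :=
  ((starRingEnd ℂ).toMonoidWithZeroHom).comp ψ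

lemma cj_apply (ψ : Ideal (𝓞 K) →*₀ ℂ) (I) : cj ψ I = (starRingEnd ℂ) (ψ I) := rfl

lemma co_cj (ψ : Ideal (𝓞 K) →*₀ ℂ) (n : ℕ) : co (cj ψ) n = (starRingEnd ℂ) (co ψ n) := by
  rcases eq_or_ne n 0 with rfl | hn
  · simp
  · simp [co_apply _ hn, cj_apply]

lemma hasSum_cj {ψ : Ideal (𝓞 K) →*₀ ℂ} {s V : ℂ}
    (h : LSeriesHasSum (co ψ) ((starRingEnd ℂ) s) V) :
    LSeriesHasSum (co (cj ψ)) s ((starRingEnd ℂ) V) := by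
  have := HasSum.star h
  rw [LSeriesHasSum]
  convert! this using 2 with n
  rcases eq_or_ne n 0 with rfl | hn
  · simp
  rw [LSeries.term_of_ne_zero hn, LSeries.term_of_ne_zero hn, co_cj]
  have h2 := Complex.conj_cpow (n : ℂ) s (by
    rw [Complex.natCast_arg]; exact Real.pi_pos.ne)
  rw [Complex.conj_natCast] at h2
  rw [h2]
  simp

theorem nonvanish (ψ₁ ψ : Ideal (𝓞 K) →*₀ ℂ) (h1 : ∀ I, ψ₁ I = ‖ψ I‖)
    (H₁ H : ℂ → ℂ) (hH₁ : Differentiable ℂ H₁) (hH : Differentiable ℂ H)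
    (hm : H₁ (-1) = 0) (hH1 : H 1 = 0)
    (hs₁ : ∀ s : ℂ, 1 < s.re → LSeriesHasSum (co ψ₁) s (H₁ s / (s - 1)))
    (hs : ∀ s : ℂ, 1 < s.re → LSeriesHasSum (co ψ) s (H s / (s - 1))) :
    deriv H 1 ≠ 0 := by
  intro hd
  set g : ℂ → ℂ := dslope (dslope H 1) 1 with hg
  have hgd : Differentiable ℂ g := dslope_differentiable (dslope_differentiable hH 1) 1
  have hHg : ∀ s, H s = (s - 1) * ((s - 1) * g s) := by
    intro s
    rw [dslope_mul hH1 (s := s), dslope_mul (H := dslope H 1) (c := 1) (by simpa using hd) (s := s)]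
  set g' : ℂ → ℂ := (starRingEnd ℂ) ∘ g ∘ (starRingEnd ℂ) with hg'
  have hgd' : Differentiable ℂ g' := by
    intro s
    have := (hgd ((starRingEnd ℂ) s)).conj_conj
    rwa [Complex.conj_conj] at this
  set A : ArithmeticFunction ℂ := (co ψ₁ * co ψ₁) * (co ψ * co (cj ψ)) with hA
  have hAlog := ((IsLogDer.co ψ₁).mul (IsLogDer.co ψ₁)).mul ((IsLogDer.co ψ).mul (IsLogDer.co (cj ψ)))
  have hA1 : A 1 = 1 := by
    simp [hA, co_one, ← Ideal.one_eq_top, -Ideal.one_eq_top]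
  have hAnn : ∀ n, 0 ≤ A n := by
    refine hAlog.nonneg ?_ hA1
    intro n
    rcases eq_or_ne n 0 with rfl | hn
    · simp
    simp only [ArithmeticFunction.add_apply, co_apply _ hn, ← Finset.sum_add_distrib]
    refine Finset.sum_nonneg fun I _ => ?_
    rw [h1, cj_apply]
    have : ((‖ψ I‖ : ℂ) * (vM I) + (‖ψ I‖ : ℂ) * (vM I) +
      (ψ I * vM I + (starRingEnd ℂ) (ψ I) * vM I)) = ((2 * (‖ψ I‖ + (ψ I).re) * vM I : ℝ) : ℂ) := by
      have := Complex.add_conj (ψ I)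
      push_cast at this ⊢
      linear_combination (vM I : ℂ) * this
    rw [this]
    have h3 : 0 ≤ ‖ψ I‖ + (ψ I).re := by
      have := Complex.abs_re_le_norm (ψ I)
      have := neg_abs_le (ψ I).re
      linarith
    exact_mod_cast mul_nonneg (mul_nonneg zero_le_two h3) (vM_nonneg I)
  have hs' : ∀ s : ℂ, 1 < s.re → LSeriesHasSum (co (cj ψ)) s ((s - 1) * g' s) := by
    intro s hs1
    have h2 := hasSum_cj (s := s) (hs ((starRingEnd ℂ) s) (by simpa using hs1))
    convert! h2 using 1
    have hne : (starRingEnd ℂ) s - 1 ≠ 0 := by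
      intro h
      have := congrArg Complex.re h
      simp at this
      linarith
    rw [hHg, mul_div_cancel_left₀ _ hne]
    simp [hg']
  have hsA : ∀ s : ℂ, 1 < s.re → LSeriesSummable A s ∧ LSeries A s = H₁ s ^ 2 * (g s * g' s) := by
    intro s hs1
    have hne : s - 1 ≠ 0 := by
      intro h
      have := congrArg Complex.re h
      simp at this
      linarith
    have s1 := (hs₁ s hs1).LSeriesSummable
    have s2 := (hs s hs1).LSeriesSummable
    have s3 := (hs' s hs1).LSeriesSummable
    have s11 := ArithmeticFunction.LSeriesSummable_mul s1 s1
    have s23 := ArithmeticFunction.LSeriesSummable_mul s2 s3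
    refine ⟨ArithmeticFunction.LSeriesSummable_mul s11 s23, ?_⟩
    rw [hA, ArithmeticFunction.LSeries_mul' s11 s23, ArithmeticFunction.LSeries_mul' s1 s1,
      ArithmeticFunction.LSeries_mul' s2 s3, (hs₁ s hs1).LSeries_eq, (hs s hs1).LSeries_eq,
      (hs' s hs1).LSeries_eq, hHg]
    field_simp
  have := LSeries.positive_of_differentiable_of_eqOn (a := A) (fun n => hAnn n)
    (by rw [hA1]; exact zero_lt_one) (f := fun s => H₁ s ^ 2 * (g s * g' s))
    ((hH₁.pow 2).mul (hgd.mul hgd')) (x := 1)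
    (LSeries.abscissaOfAbsConv_le_of_forall_lt_LSeriesSummable fun y hy => (hsA y (by simpa using hy)).1)
    (fun s hs1 => ((hsA s hs1).2).symm) (-1)
  simp [hm] at this

/-- convergence of the ideal zeta function -/
def IdealSum (K : Type*) [Field K] [NumberField K] : Prop :=
  ∀ σ : ℝ, 1 < σ → Summable (fun I : Ideal (𝓞 K) => 1 / (Ideal.absNorm I : ℝ) ^ σ)

lemma summable_vM (hK : IdealSum K) {σ : ℝ} (hσ : 1 < σ) :
    Summable (fun I : Ideal (𝓞 K) => vM I / (Ideal.absNorm I : ℝ) ^ σ) := by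
  set ε := (σ - 1) / 2 with hε
  have hε0 : 0 < ε := by linarith
  refine Summable.of_nonneg_of_le (fun I => div_nonneg (vM_nonneg I) (by positivity)) ?_
    ((hK (1 + ε) (by linarith)).mul_left (1 / ε))
  intro I
  by_cases hI : I = 0
  · subst hI
    simp only [Submodule.zero_eq_bot, Ideal.absNorm_bot, Nat.cast_zero]
    rw [Real.zero_rpow (by linarith), Real.zero_rpow (by linarith)]
    simp
  have hN : (0 : ℝ) < Ideal.absNorm I := by exact_mod_cast absNorm_pos hI
  have h1 := (vM_le hI).trans (Real.log_le_rpow_div hN.le hε0)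
  have h2 : (Ideal.absNorm I : ℝ) ^ σ = (Ideal.absNorm I : ℝ) ^ (1 + ε) * (Ideal.absNorm I : ℝ) ^ ε := by
    rw [← Real.rpow_add hN]
    congr 1
    linarith
  have p1 : (0 : ℝ) < (Ideal.absNorm I : ℝ) ^ (1 + ε) := by positivity
  have p2 : (0 : ℝ) < (Ideal.absNorm I : ℝ) ^ ε := by positivity
  rw [h2, div_le_iff₀ (by positivity)]
  calc vM I ≤ _ := h1
    _ = _ := by field_simp

lemma summable_vM_c (hK : IdealSum K) (f : Ideal (𝓞 K) → ℂ) (hf : ∀ I, ‖f I‖ ≤ 1) {s : ℂ} (hs : 1 < s.re) :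
    Summable (fun I : Ideal (𝓞 K) => f I * vM I / (Ideal.absNorm I : ℂ) ^ s) := by
  refine Summable.of_norm_bounded (summable_vM hK hs) ?_
  intro I
  rcases Nat.eq_zero_or_pos (Ideal.absNorm I) with h | h
  · rw [h]
    simp [Complex.zero_cpow (show s ≠ 0 by rintro rfl; simp at hs; linarith),
      Real.zero_rpow (show s.re ≠ 0 by linarith)]
  rw [norm_div, norm_mul, Complex.norm_natCast_cpow_of_pos h, Complex.norm_real, Real.norm_of_nonneg (vM_nonneg I)]
  gcongr
  calc ‖f I‖ * vM I ≤ 1 * vM I := by gcongr; exacts [vM_nonneg I, hf I]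
    _ = _ := one_mul _

theorem logder_eq (hK : IdealSum K) (ψ : Ideal (𝓞 K) →*₀ ℂ) (hψ : ∀ I, ‖ψ I‖ ≤ 1) (H : ℂ → ℂ)
    (hH : Differentiable ℂ H)
    (hs : ∀ s : ℂ, 1 < s.re → LSeriesHasSum (co ψ) s (H s / (s - 1))) {s : ℂ} (h1 : 1 < s.re) :
    H s * ((s - 1) * ∑' I : Ideal (𝓞 K), ψ I * vM I / (Ideal.absNorm I : ℂ) ^ s) =
      H s - (s - 1) * deriv H s := by
  have hne : s - 1 ≠ 0 := by
    intro h
    have := congrArg Complex.re h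
    simp at this
    linarith
  have hsum := (summable_vM_c hK ψ hψ h1).hasSum
  have hΛ := co_hasSum (f := fun I => ψ I * vM I) (show s ≠ 0 by rintro rfl; simp at h1; linarith) hsum
  set X := ∑' I : Ideal (𝓞 K), ψ I * vM I / (Ideal.absNorm I : ℂ) ^ s
  have hab : LSeries.abscissaOfAbsConv (co ψ) ≤ (1 : ℝ) :=
    LSeries.abscissaOfAbsConv_le_of_forall_lt_LSeriesSummable fun y hy =>
      (hs y (by simpa using hy)).LSeriesSummable
  have hder := LSeries_hasDerivAt (f := co ψ) (s := s)
    (lt_of_le_of_lt hab (by exact_mod_cast h1))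
  have hlm : LSeries (LSeries.logMul (co ψ)) s = H s / (s - 1) * X := by
    have : LSeries.logMul (co ψ) = fun n => (co ψ * co (fun J => ψ J * vM J)) n := by
      ext n
      rw [← co_log, LSeries.logMul, mul_comm]
      simp
    rw [this, ArithmeticFunction.LSeries_mul' (hs s h1).LSeriesSummable hΛ.LSeriesSummable,
      (hs s h1).LSeries_eq, hΛ.LSeries_eq]
  have hder2 : HasDerivAt (fun s => H s / (s - 1)) ((deriv H s * (s - 1) - H s * 1) / (s - 1) ^ 2) s :=
    (hH s).hasDerivAt.div ((hasDerivAt_id s).sub_const 1) hne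
  have hev : LSeries (co ψ) =ᶠ[𝓝 s] fun s => H s / (s - 1) := by
    filter_upwards [(isOpen_lt continuous_const Complex.continuous_re).mem_nhds h1] with z hz
    exact (hs z hz).LSeries_eq
  have := hder.unique (hder2.congr_of_eventuallyEq hev)
  rw [hlm] at this
  field_simp at this
  linear_combination -this

lemma tends_one {f : ℂ → ℂ} (hf : Continuous f) :
    Tendsto (fun x : ℝ => f x) (𝓝[>] 1) (𝓝 (f 1)) := by
  have : Tendsto (fun x : ℝ => f x) (𝓝 1) (𝓝 (f ((1 : ℝ) : ℂ))) :=
    (hf.comp Complex.continuous_ofReal).tendsto 1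
  rw [Complex.ofReal_one] at this
  exact this.mono_left nhdsWithin_le_nhds

theorem logder_tendsto_one (hK : IdealSum K) (ψ : Ideal (𝓞 K) →*₀ ℂ) (hψ : ∀ I, ‖ψ I‖ ≤ 1) (H : ℂ → ℂ)
    (hH : Differentiable ℂ H) (hH1 : H 1 ≠ 0)
    (hs : ∀ s : ℂ, 1 < s.re → LSeriesHasSum (co ψ) s (H s / (s - 1))) :
    Tendsto (fun x : ℝ => ((x : ℂ) - 1) * ∑' I : Ideal (𝓞 K), ψ I * vM I / (Ideal.absNorm I : ℂ) ^ (x : ℂ))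
      (𝓝[>] 1) (𝓝 1) := by
  have hc := hH.continuous
  have hdc : Continuous (deriv H) := (hH.contDiff (n := 1)).continuous_deriv le_rfl
  have t1 := tends_one hc
  have t2 : Tendsto (fun x : ℝ => (H x - (x - 1) * deriv H x) / H x) (𝓝[>] 1)
      (𝓝 ((H 1 - (1 - 1) * deriv H 1) / H 1)) :=
    (tends_one (f := fun z => H z - (z - 1) * deriv H z) (by fun_prop)).div t1 hH1
  have e : (H 1 - (1 - 1) * deriv H 1) / H 1 = 1 := by simp [hH1]
  rw [e] at t2
  refine t2.congr' ?_
  filter_upwards [t1.eventually_ne hH1, self_mem_nhdsWithin] with x hx hx1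
  rw [← logder_eq hK ψ hψ H hH hs (s := x) (by simpa using hx1), mul_div_cancel_left₀ _ hx]

theorem logder_tendsto_zero (hK : IdealSum K) (ψ : Ideal (𝓞 K) →*₀ ℂ) (hψ : ∀ I, ‖ψ I‖ ≤ 1) (H : ℂ → ℂ)
    (hH : Differentiable ℂ H) (hH1 : H 1 = 0) (hd : deriv H 1 ≠ 0)
    (hs : ∀ s : ℂ, 1 < s.re → LSeriesHasSum (co ψ) s (H s / (s - 1))) :
    Tendsto (fun x : ℝ => ((x : ℂ) - 1) * ∑' I : Ideal (𝓞 K), ψ I * vM I / (Ideal.absNorm I : ℂ) ^ (x : ℂ))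
      (𝓝[>] 1) (𝓝 0) := by
  have hc := (dslope_differentiable hH 1).continuous
  have hdc : Continuous (deriv H) := (hH.contDiff (n := 1)).continuous_deriv le_rfl
  have hd' : dslope H 1 1 ≠ 0 := by simpa using hd
  have t1 := tends_one hc
  have t2 : Tendsto (fun x : ℝ => (dslope H 1 x - deriv H x) / dslope H 1 x) (𝓝[>] 1)
      (𝓝 ((dslope H 1 1 - deriv H 1) / dslope H 1 1)) :=
    (tends_one (f := fun z => dslope H 1 z - deriv H z) (by fun_prop)).div t1 hd'
  have e : (dslope H 1 1 - deriv H 1) / dslope H 1 1 = 0 := by simp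
  rw [e] at t2
  refine t2.congr' ?_
  filter_upwards [t1.eventually_ne hd', self_mem_nhdsWithin] with x hx hx1
  have h := logder_eq hK ψ hψ H hH hs (s := x) (by simpa using hx1)
  have hne : (x : ℂ) - 1 ≠ 0 := by
    intro h
    have := congrArg Complex.re h
    simp at this
    have : (1 : ℝ) < x := hx1
    linarith
  rw [dslope_mul hH1 (s := x)] at h
  rw [div_eq_iff hx]
  apply mul_left_cancel₀ hne
  linear_combination -h

end PartC

/-! ### Part D : primes in classes -/
section PartD
open NumberField Filter Topology

/-- extension by zero of a character -/
noncomputable def ext0 {G : Type*} [CommGroup G] (η : G →* ℂˣ) : WithZero G →*₀ ℂ :=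
  WithZero.lift' ((Units.coeHom ℂ).comp η)

lemma ext0_coe {G : Type*} [CommGroup G] (η : G →* ℂˣ) (g : G) : ext0 η (g : WithZero G) = η g := rfl

lemma norm_char {G : Type*} [CommGroup G] [Finite G] (η : G →* ℂˣ) (g : G) : ‖(η g : ℂ)‖ = 1 := by
  have h : (η g : ℂ) ^ Nat.card G = 1 := by
    rw [← Units.val_pow_eq_pow_val, ← map_pow, pow_card_eq_one']
    simp
  exact Complex.norm_eq_one_of_pow_eq_one h Nat.card_pos.ne'

lemma ext0_norm {G : Type*} [CommGroup G] [Finite G] (η : G →* ℂˣ) (x : WithZero G) :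
    ext0 1 x = (‖ext0 η x‖ : ℂ) := by
  induction x with
  | zero => simp
  | coe g => rw [ext0_coe, ext0_coe, norm_char]; simp

lemma ext0_norm_le {G : Type*} [CommGroup G] [Finite G] (η : G →* ℂˣ) (x : WithZero G) :
    ‖ext0 η x‖ ≤ 1 := by
  induction x with
  | zero => simp
  | coe g => rw [ext0_coe, norm_char]

lemma sum_char {G : Type*} [CommGroup G] [Finite G] [Fintype (G →* ℂˣ)] {g : G} (hg : g ≠ 1) :
    ∑ η : G →* ℂˣ, (η g : ℂ) = 0 := by
  obtain ⟨η₀, h0⟩ := CommGroup.exists_apply_ne_one_of_hasEnoughRootsOfUnity G ℂ hg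
  have h1 : (η₀ g : ℂ) * ∑ η : G →* ℂˣ, (η g : ℂ) = ∑ η : G →* ℂˣ, (η g : ℂ) := by
    rw [Finset.mul_sum]
    refine Fintype.sum_equiv (Equiv.mulLeft η₀) _ _ fun η => ?_
    simp
  have h2 : ((η₀ g : ℂ) - 1) * ∑ η : G →* ℂˣ, (η g : ℂ) = 0 := by linear_combination h1
  rcases mul_eq_zero.1 h2 with h | h
  · exact absurd (Units.ext (sub_eq_zero.1 h)) h0
  · exact h

open Classical in
lemma sum_ext0 {G : Type*} [CommGroup G] [Finite G] [Fintype (G →* ℂˣ)] (β : G) (x : WithZero G) :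
    ∑ η : G →* ℂˣ, (η β⁻¹ : ℂ) * ext0 η x = if x = β then (Fintype.card (G →* ℂˣ) : ℂ) else 0 := by
  induction x with
  | zero => simp
  | coe g =>
    simp only [ext0_coe, WithZero.coe_inj, ← Units.val_mul, ← map_mul]
    split_ifs with h
    · subst h
      simp
    · exact sum_char (fun h2 => h (inv_mul_eq_one.1 h2).symm)

variable {K : Type*} [Field K] [NumberField K]

lemma two_le_norm {P : Ideal (𝓞 K)} (hP : Prime P) : 2 ≤ Ideal.absNorm P := by
  have h0 := absNorm_pos hP.ne_zero
  have h1 : Ideal.absNorm P ≠ 1 := by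
    rw [Ne, Ideal.absNorm_eq_one_iff]
    intro h
    exact hP.not_isUnit (Ideal.isUnit_iff.2 h)
  omega

open Classical in
lemma summable_nonprime (hK : IdealSum K) :
    Summable (fun I : Ideal (𝓞 K) => if Prime I then 0 else vM I / (Ideal.absNorm I : ℝ)) := by
  let j : {P : Ideal (𝓞 K) // Prime P} × ℕ → Ideal (𝓞 K) := fun x => x.1.1 ^ (x.2 + 2)
  have hj : Function.Injective j := by
    rintro ⟨⟨P, hP⟩, k⟩ ⟨⟨Q, hQ⟩, l⟩ h
    change P ^ (k + 2) = Q ^ (l + 2) at h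
    have hPQ : P = Q := eq_of_prime_pow_eq hP hQ (by omega) h
    subst hPQ
    have := pow_injective_of_not_isUnit hP.not_isUnit hP.ne_zero h
    simp at this
    simp [this]
  rw [← hj.summable_iff]
  · have s1 : Summable (fun P : {P : Ideal (𝓞 K) // Prime P} =>
        vM P.1 / (Ideal.absNorm P.1 : ℝ) ^ (2 : ℝ)) :=
      (summable_vM hK one_lt_two).comp_injective Subtype.val_injective
    have s2 : Summable (fun k : ℕ => (1 / 2 : ℝ) ^ k) := summable_geometric_two
    have s3 := s1.mul_of_nonneg s2 (fun P => div_nonneg (vM_nonneg _) (by positivity))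
      (fun k => by positivity)
    refine Summable.of_nonneg_of_le ?_ ?_ s3
    · rintro x
      simp only [Function.comp]
      split_ifs
      · exact le_rfl
      · exact div_nonneg (vM_nonneg _) (by positivity)
    · rintro ⟨⟨P, hP⟩, k⟩
      have hnp : ¬ Prime (P ^ (k + 2)) := not_prime_pow (by omega)
      have hv : vM P = Real.log (Ideal.absNorm P) := by simpa using vM_pow hP one_pos
      have h2 : (2 : ℝ) ≤ Ideal.absNorm P := by exact_mod_cast two_le_norm hP
      simp only [Function.comp, j, if_neg hnp, vM_pow hP (show 0 < k + 2 by omega), hv, map_pow,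
        Nat.cast_pow]
      rw [show (2 : ℝ) = ((2 : ℕ) : ℝ) by norm_num, Real.rpow_natCast, pow_add]
      have hl : 0 ≤ Real.log (Ideal.absNorm P) := Real.log_natCast_nonneg _
      have h3 : (1 : ℝ) / (Ideal.absNorm P : ℝ) ^ k ≤ (1 / ((2 : ℕ) : ℝ)) ^ k := by
        rw [one_div_pow]
        push_cast
        gcongr
      calc _ = Real.log (Ideal.absNorm P) / (Ideal.absNorm P : ℝ) ^ 2 * (1 / (Ideal.absNorm P : ℝ) ^ k) := by
            field_simp
        _ ≤ _ := by gcongr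
  · intro I hI
    split_ifs with hp
    · rfl
    · rw [vM_eq_zero, zero_div]
      rintro ⟨P, hP, k, hk, rfl⟩
      apply hI
      rcases Nat.lt_or_ge k 2 with h | h
      · have : k = 1 := by omega
        subst this
        exact absurd (by simpa using hP) hp
      · exact ⟨⟨⟨P, hP⟩, k - 2⟩, by simp only [j]; congr 1; omega⟩

theorem exists_prime_class {G : Type*} [CommGroup G] [Finite G] (hK : IdealSum K)
    (cl : Ideal (𝓞 K) →*₀ WithZero G) (H : (G →* ℂˣ) → ℂ → ℂ) (hH : ∀ η, Differentiable ℂ (H η))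
    (hm : ∀ η, H η (-1) = 0) (h1 : H 1 1 ≠ 0) (h0 : ∀ η, η ≠ 1 → H η 1 = 0)
    (hs : ∀ η, ∀ s : ℂ, 1 < s.re → LSeriesHasSum (co ((ext0 η).comp cl)) s (H η s / (s - 1))) (β : G) :
    ∃ P : Ideal (𝓞 K), Prime P ∧ cl P = β := by
  classical
  by_contra! hno
  have : Finite (G →* ℂˣ) :=
    Finite.of_equiv G (CommGroup.monoidHom_mulEquiv_of_hasEnoughRootsOfUnity G ℂ).some.toEquiv.symm
  have : Fintype (G →* ℂˣ) := Fintype.ofFinite _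
  set c : ℝ := ((Fintype.card (G →* ℂˣ) : ℕ) : ℝ) with hc
  set ψ : (G →* ℂˣ) → Ideal (𝓞 K) →*₀ ℂ := fun η => (ext0 η).comp cl with hψ
  have hb : ∀ η I, ‖ψ η I‖ ≤ 1 := fun η I => ext0_norm_le η (cl I)
  set X : (G →* ℂˣ) → ℝ → ℂ := fun η x =>
    ((x : ℂ) - 1) * ∑' I : Ideal (𝓞 K), ψ η I * vM I / (Ideal.absNorm I : ℂ) ^ (x : ℂ) with hX
  have hlim : ∀ η, Tendsto (X η) (𝓝[>] 1) (𝓝 (if η = 1 then 1 else 0)) := by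
    intro η
    split_ifs with h
    · subst h
      exact logder_tendsto_one hK (ψ 1) (hb 1) (H 1) (hH 1) h1 (hs 1)
    · refine logder_tendsto_zero hK (ψ η) (hb η) (H η) (hH η) (h0 η h) ?_ (hs η)
      exact nonvanish (ψ 1) (ψ η) (fun I => ext0_norm η (cl I)) (H 1) (H η) (hH 1) (hH η) (hm 1)
        (h0 η h) (hs 1) (hs η)
  have hlim2 : Tendsto (fun x => ∑ η : G →* ℂˣ, (η β⁻¹ : ℂ) * X η x) (𝓝[>] 1) (𝓝 1) := by
    have := tendsto_finsetSum (Finset.univ : Finset (G →* ℂˣ))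
      (fun η _ => (hlim η).const_mul (η β⁻¹ : ℂ))
    simpa using this
  set S : ℝ := ∑' I : Ideal (𝓞 K), if Prime I then 0 else vM I / (Ideal.absNorm I : ℝ) with hS
  have hbound : ∀ x : ℝ, 1 < x → ‖∑ η : G →* ℂˣ, (η β⁻¹ : ℂ) * X η x‖ ≤ (x - 1) * (c * S) := by
    intro x hx
    have hsm : ∀ η ∈ (Finset.univ : Finset (G →* ℂˣ)), Summable (fun I : Ideal (𝓞 K) =>
        (η β⁻¹ : ℂ) * (ψ η I * vM I / (Ideal.absNorm I : ℂ) ^ (x : ℂ))) :=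
      fun η _ => (summable_vM_c hK (ψ η) (hb η) (s := x) (by simpa using hx)).mul_left _
    have e1 : ∑ η : G →* ℂˣ, (η β⁻¹ : ℂ) * X η x = ((x : ℂ) - 1) * ∑' I : Ideal (𝓞 K),
        ∑ η : G →* ℂˣ, (η β⁻¹ : ℂ) * (ψ η I * vM I / (Ideal.absNorm I : ℂ) ^ (x : ℂ)) := by
      rw [Summable.tsum_finsetSum hsm, Finset.mul_sum]
      refine Finset.sum_congr rfl fun η _ => ?_
      rw [tsum_mul_left, hX]
      ring
    rw [e1, norm_mul]
    have e2 : ‖(x : ℂ) - 1‖ = x - 1 := by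
      rw [← Complex.ofReal_one, ← Complex.ofReal_sub, Complex.norm_real, Real.norm_of_nonneg (by linarith)]
    rw [e2]
    refine mul_le_mul_of_nonneg_left ?_ (by linarith)
    refine tsum_of_norm_bounded ((summable_nonprime hK).hasSum.mul_left c) ?_
    intro I
    have e3 : ∑ η : G →* ℂˣ, (η β⁻¹ : ℂ) * (ψ η I * vM I / (Ideal.absNorm I : ℂ) ^ (x : ℂ)) =
        (∑ η : G →* ℂˣ, (η β⁻¹ : ℂ) * ext0 η (cl I)) * (vM I / (Ideal.absNorm I : ℂ) ^ (x : ℂ)) := by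
      rw [Finset.sum_mul]
      refine Finset.sum_congr rfl fun η _ => ?_
      simp only [hψ, MonoidWithZeroHom.comp_apply]
      ring
    rw [e3, sum_ext0]
    by_cases hI : Prime I
    · simp [hI, hno I hI]
    rw [if_neg hI, norm_mul]
    refine mul_le_mul ?_ ?_ (norm_nonneg _) (by positivity)
    · split_ifs
      · simp [hc]
      · simp [hc]
    · by_cases hI0 : I = 0
      · have : vM (0 : Ideal (𝓞 K)) = 0 := by
          apply vM_eq_zero
          rintro ⟨P, hP, k, hk, h⟩
          exact pow_ne_zero k hP.ne_zero h
        rw [hI0, this]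
        simp
      have hN := absNorm_pos hI0
      rw [norm_div, Complex.norm_real, Real.norm_of_nonneg (vM_nonneg I),
        Complex.norm_natCast_cpow_of_pos hN, Complex.ofReal_re]
      have hN1 : (1 : ℝ) ≤ Ideal.absNorm I := by exact_mod_cast hN
      refine div_le_div_of_nonneg_left (vM_nonneg I) (by positivity) ?_
      calc (Ideal.absNorm I : ℝ) = (Ideal.absNorm I : ℝ) ^ (1 : ℝ) := (Real.rpow_one _).symm
        _ ≤ _ := Real.rpow_le_rpow_of_exponent_le hN1 hx.le
  have hlim3 : Tendsto (fun x => ∑ η : G →* ℂˣ, (η β⁻¹ : ℂ) * X η x) (𝓝[>] 1) (𝓝 0) := by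
    refine squeeze_zero_norm' (a := fun x : ℝ => (x - 1) * (c * S)) ?_ ?_
    · filter_upwards [self_mem_nhdsWithin] with x hx using hbound x hx
    · have : Tendsto (fun x : ℝ => (x - 1) * (c * S)) (𝓝 1) (𝓝 ((1 - 1) * (c * S))) :=
        (Continuous.tendsto (by fun_prop) 1)
      rw [sub_self, zero_mul] at this
      exact this.mono_left nhdsWithin_le_nhds
  exact zero_ne_one (tendsto_nhds_unique hlim3 hlim2)

end PartD

/-! ### Part E : the third cyclotomic field -/
section PartE
open NumberField

section ray
variable {R : Type*} [CommRing R]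

/-- ray class group (all ideals principal) -/
def Ray (J : Ideal R) : Type _ :=
  (R ⧸ J)ˣ ⧸ (Units.map (Ideal.Quotient.mk J : R →* R ⧸ J)).range

noncomputable instance (J : Ideal R) : CommGroup (Ray J) :=
  inferInstanceAs (CommGroup ((R ⧸ J)ˣ ⧸ (Units.map (Ideal.Quotient.mk J : R →* R ⧸ J)).range))

/-- the quotient map -/
noncomputable def rmk (J : Ideal R) : (R ⧸ J)ˣ →* Ray J :=
  QuotientGroup.mk' (Units.map (Ideal.Quotient.mk J : R →* R ⧸ J)).range

lemma rmk_surj (J : Ideal R) : Function.Surjective (rmk J) := QuotientGroup.mk'_surjective _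

lemma rmk_eq (J : Ideal R) {x y : (R ⧸ J)ˣ} (h : rmk J x = rmk J y) :
    ∃ u : Rˣ, Units.map (Ideal.Quotient.mk J : R →* R ⧸ J) u = x⁻¹ * y :=
  QuotientGroup.eq.1 h

lemma rmk_one (J : Ideal R) (u : Rˣ) :
    rmk J (Units.map (Ideal.Quotient.mk J : R →* R ⧸ J) u) = 1 :=
  (QuotientGroup.eq_one_iff _).2 ⟨u, rfl⟩

instance (J : Ideal R) [Finite (R ⧸ J)] : Finite (Ray J) := Finite.of_surjective _ (rmk_surj J)

open Classical in
/-- class map on residues -/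
noncomputable def cbar (J : Ideal R) [Nontrivial (R ⧸ J)] : (R ⧸ J) →*₀ WithZero (Ray J) where
  toFun x := if h : IsUnit x then (rmk J h.unit : WithZero (Ray J)) else 0
  map_zero' := by simp
  map_one' := by
    rw [dif_pos isUnit_one, IsUnit.unit_one, map_one]
    rfl
  map_mul' x y := by
    by_cases hx : IsUnit x
    · by_cases hy : IsUnit y
      · rw [dif_pos hx, dif_pos hy, dif_pos (hx.mul hy), ← WithZero.coe_mul, ← map_mul,
          IsUnit.unit_mul]
      · rw [dif_neg hy, dif_neg (fun h => hy (isUnit_of_mul_isUnit_right h)), mul_zero]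
    · rw [dif_neg hx, dif_neg (fun h => hx (isUnit_of_mul_isUnit_left h)), zero_mul]

variable (J : Ideal R) [Nontrivial (R ⧸ J)]

lemma cbar_unit (u : (R ⧸ J)ˣ) : cbar J (u : R ⧸ J) = (rmk J u : WithZero (Ray J)) := by
  classical
  have h : cbar J (u : R ⧸ J) = (rmk J u.isUnit.unit : WithZero (Ray J)) := dif_pos u.isUnit
  rw [h, IsUnit.unit_of_val_units]

lemma cbar_not {x : R ⧸ J} (h : ¬ IsUnit x) : cbar J x = 0 := dif_neg h

lemma cbar_one_of_unit {u : R} (hu : IsUnit u) : cbar J (Ideal.Quotient.mk J u) = 1 := by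
  obtain ⟨u, rfl⟩ := hu
  have : Ideal.Quotient.mk J (u : R) = ((Units.map (Ideal.Quotient.mk J : R →* R ⧸ J) u : (R ⧸ J)ˣ) : R ⧸ J) := rfl
  rw [this, cbar_unit, rmk_one]
  rfl

lemma cbar_assoc {x y : R} (h : Associated x y) :
    cbar J (Ideal.Quotient.mk J x) = cbar J (Ideal.Quotient.mk J y) := by
  obtain ⟨u, rfl⟩ := h
  rw [map_mul, map_mul, cbar_one_of_unit J u.isUnit, mul_one]

variable [IsDomain R] [IsPrincipalIdealRing R]
/-- class map on ideals -/
noncomputable def clm : Ideal R →*₀ WithZero (Ray J) where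
  toFun I := cbar J (Ideal.Quotient.mk J (Submodule.IsPrincipal.generator I))
  map_zero' := by
    rw [(Submodule.IsPrincipal.eq_bot_iff_generator_eq_zero _).1 (Ideal.zero_eq_bot)]
    simp
  map_one' := by
    apply cbar_one_of_unit
    rw [← Ideal.span_singleton_eq_top, Ideal.span_singleton_generator, Ideal.one_eq_top]
  map_mul' I I' := by
    rw [← map_mul, ← map_mul]
    apply cbar_assoc
    rw [← Ideal.span_singleton_eq_span_singleton, ← Ideal.span_singleton_mul_span_singleton]
    simp only [Ideal.span_singleton_generator]

lemma clm_span (x : R) : clm J (Ideal.span {x}) = cbar J (Ideal.Quotient.mk J x) := by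
  apply cbar_assoc
  rw [← Ideal.span_singleton_eq_span_singleton, Ideal.span_singleton_generator]

lemma sum_cbar [Fintype (R ⧸ J)] (η : Ray J →* ℂˣ) (hη : η ≠ 1) : ∑ y : R ⧸ J, ext0 η (cbar J y) = 0 := by
  obtain ⟨g, hg⟩ : ∃ g, η g ≠ 1 := by
    by_contra! h
    exact hη (MonoidHom.ext h)
  obtain ⟨u, rfl⟩ := rmk_surj J g
  have h1 : (η (rmk J u) : ℂ) * ∑ y : R ⧸ J, ext0 η (cbar J y) = ∑ y : R ⧸ J, ext0 η (cbar J y) := by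
    rw [Finset.mul_sum]
    refine Fintype.sum_equiv (Units.mulLeft u) _ _ fun y => ?_
    simp [cbar_unit, ext0_coe]
  have h2 : ((η (rmk J u) : ℂ) - 1) * ∑ y : R ⧸ J, ext0 η (cbar J y) = 0 := by linear_combination h1
  rcases mul_eq_zero.1 h2 with h | h
  · exact absurd (Units.ext (sub_eq_zero.1 h)) hg
  · exact h

end ray

variable {K : Type*} [Field K] [NumberField K] [IsCyclotomicExtension {3} ℚ K]
  {ζ : 𝓞 K} (hζ : IsPrimitiveRoot ζ 3)

include hζ

lemma zeta_sq : ζ ^ 2 = -1 - ζ := by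
  have h1 : ζ ≠ 1 := hζ.ne_one (by norm_num)
  have h2 : ζ ^ 3 = 1 := hζ.pow_eq_one
  have h3 : (ζ - 1) * (ζ ^ 2 + ζ + 1) = 0 := by linear_combination h2
  rcases mul_eq_zero.1 h3 with h | h
  · exact absurd (sub_eq_zero.1 h) h1
  · linear_combination h

lemma exists_basis : ∃ B : Module.Basis (Fin 2) ℤ (𝓞 K), B 0 = 1 ∧ B 1 = ζ := by
  have hζK : IsPrimitiveRoot (ζ : K) 3 := hζ.map_of_injective (RingOfIntegers.coe_injective)
  have hd : hζK.integralPowerBasis.dim = 2 := by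
    rw [hζK.integralPowerBasis_dim]; rfl
  have hg : hζK.integralPowerBasis.gen = ζ := by
    rw [hζK.integralPowerBasis_gen]; ext; rfl
  refine ⟨hζK.integralPowerBasis.basis.reindex (finCongr hd), ?_, ?_⟩
  · simp
  · simp [hg]

lemma coord_bij : Function.Bijective (fun x : ℤ × ℤ => (x.1 : 𝓞 K) + (x.2 : 𝓞 K) * ζ) := by
  obtain ⟨B, h0, h1⟩ := exists_basis hζ
  constructor
  · rintro ⟨a, b⟩ ⟨a', b'⟩ h
    have hh : ∑ i, ![a, b] i • B i = ∑ i, ![a', b'] i • B i := by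
      simpa [Fin.sum_univ_two, h0, h1] using h
    have h2 := congrArg (fun z => (B.repr z : Fin 2 → ℤ)) hh
    simp only [B.repr_sum_self] at h2
    have e0 := congrFun h2 0
    have e1 := congrFun h2 1
    simp at e0 e1
    simp [e0, e1]
  · intro x
    refine ⟨(B.repr x 0, B.repr x 1), ?_⟩
    have := B.sum_repr x
    simpa [Fin.sum_univ_two, h0, h1] using this

lemma norm_coord (a b : ℤ) :
    (Ideal.absNorm (Ideal.span {(a : 𝓞 K) + (b : 𝓞 K) * ζ}) : ℤ) = eisN a b := by
  obtain ⟨B, h0, h1⟩ := exists_basis hζ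
  have key : ∀ (c d : ℤ) (i : Fin 2), B.repr ((c : 𝓞 K) + (d : 𝓞 K) * ζ) i = ![c, d] i := by
    intro c d i
    have hh : (c : 𝓞 K) + (d : 𝓞 K) * ζ = ∑ i, ![c, d] i • B i := by
      simp [Fin.sum_univ_two, h0, h1]
    rw [hh, B.repr_sum_self]
  have e : ((a : 𝓞 K) + (b : 𝓞 K) * ζ) * ζ = ((-b : ℤ) : 𝓞 K) + ((a - b : ℤ) : 𝓞 K) * ζ := by
    push_cast
    linear_combination (b : 𝓞 K) * zeta_sq hζ
  have hn : Algebra.norm ℤ ((a : 𝓞 K) + (b : 𝓞 K) * ζ) = eisN a b := by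
    rw [Algebra.norm_eq_matrix_det B, Matrix.det_fin_two]
    simp only [Algebra.leftMulMatrix_eq_repr_mul, h0, h1, mul_one, e, key]
    simp [eisN]
    ring
  rw [Ideal.absNorm_span_singleton, hn, Int.natAbs_of_nonneg (eisN_nonneg a b)]

lemma units_finite : Finite (𝓞 K)ˣ := by
  have hζK : IsPrimitiveRoot (ζ : K) 3 := hζ.map_of_injective (RingOfIntegers.coe_injective)
  exact Set.finite_univ_iff.1 (Set.Finite.subset (List.finite_toSet _)
    (fun u _ => IsCyclotomicExtension.Rat.Three.Units.mem hζK u))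

omit [IsCyclotomicExtension {3} ℚ K] hζ in
lemma card_fibre {x : 𝓞 K} (hx : x ≠ 0) :
    Nat.card ((fun y : 𝓞 K => Ideal.span {y}) ⁻¹' {Ideal.span {x}}) = Nat.card (𝓞 K)ˣ := by
  symm
  refine Nat.card_congr (Equiv.ofBijective
    (fun u => ⟨x * u, by simp [Ideal.span_singleton_eq_span_singleton, Associated.comm]⟩) ⟨?_, ?_⟩)
  · intro u v h
    have := congrArg Subtype.val h
    exact Units.ext (mul_left_cancel₀ hx this)
  · rintro ⟨y, hy⟩
    obtain ⟨u, hu⟩ := Ideal.span_singleton_eq_span_singleton.1 (Set.mem_singleton_iff.1 hy).symm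
    exact ⟨u, Subtype.ext hu⟩

omit hζ in
lemma ideal_hasSum {E : Type*} [NormedField E] [CompleteSpace E] [CharZero E]
    (F : Ideal (𝓞 K) → E) (hF : F ⊥ = 0) {V : E}
    (h : HasSum (fun x : 𝓞 K => F (Ideal.span {x})) V) (hu : Finite (𝓞 K)ˣ) :
    HasSum F (V / Nat.card (𝓞 K)ˣ) := by
  have : IsPrincipalIdealRing (𝓞 K) := IsCyclotomicExtension.Rat.three_pid K
  have hw : (Nat.card (𝓞 K)ˣ : E) ≠ 0 := by exact_mod_cast Nat.card_pos.ne'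
  have h2 := (h.tsum_fiberwise (fun x : 𝓞 K => Ideal.span {x})).div_const (Nat.card (𝓞 K)ˣ : E)
  convert! h2 using 2 with I
  have e : (fun x : (fun y : 𝓞 K => Ideal.span {y}) ⁻¹' {I} => F (Ideal.span {(x : 𝓞 K)})) = fun _ => F I := by
    funext x
    rw [show Ideal.span {(x : 𝓞 K)} = I from x.2]
  rw [e, tsum_const]
  by_cases hI : I = ⊥
  · rw [hI, hF]; simp
  obtain ⟨x, rfl⟩ : ∃ x, I = Ideal.span {x} := ⟨_, (Ideal.span_singleton_generator I).symm⟩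
  rw [card_fibre (by rintro rfl; simp at hI), nsmul_eq_mul, mul_div_cancel_left₀ _ hw]

/-- coordinates -/
noncomputable def coordE : ℤ × ℤ ≃ 𝓞 K := Equiv.ofBijective _ (coord_bij hζ)

lemma coordE_apply (x : ℤ × ℤ) : coordE hζ x = (x.1 : 𝓞 K) + (x.2 : 𝓞 K) * ζ := rfl

lemma idealSum : IdealSum K := by
  intro σ hσ
  have h := eisN_summable hσ
  have h2 : Summable (fun x : 𝓞 K => 1 / (Ideal.absNorm (Ideal.span {x}) : ℝ) ^ σ) := by
    rw [← (coordE hζ).summable_iff]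
    refine h.congr fun x => ?_
    simp only [Function.comp, coordE_apply]
    rw [← norm_coord hζ, Int.cast_natCast]
  exact (ideal_hasSum (fun I => 1 / (Ideal.absNorm I : ℝ) ^ σ)
    (by simp [Real.zero_rpow (show σ ≠ 0 by linarith)]) h2.hasSum (units_finite hζ)).summable

end PartE

/-! ### Part F : conclusion -/
section PartF
open NumberField

variable {K : Type*} [Field K] [NumberField K] [IsCyclotomicExtension {3} ℚ K]
  {ζ : 𝓞 K} (hζ : IsPrimitiveRoot ζ 3)

include hζ

lemma dvd_coord {M a b : ℤ} (h : (M : 𝓞 K) ∣ (a : 𝓞 K) + (b : 𝓞 K) * ζ) : M ∣ a ∧ M ∣ b := by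
  obtain ⟨y, hy⟩ := h
  obtain ⟨⟨c, d⟩, rfl⟩ := (coord_bij hζ).2 y
  have h2 : ((a, b) : ℤ × ℤ) = (M * c, M * d) := by
    apply (coord_bij hζ).1
    simp only
    rw [hy]
    push_cast
    ring
  simp only [Prod.mk.injEq] at h2
  exact ⟨⟨c, h2.1⟩, ⟨d, h2.2⟩⟩

lemma sum_box (M : ℕ) (hM : 0 < M) (f : 𝓞 K ⧸ Ideal.span {(M : 𝓞 K)} → ℂ)
    [Fintype (𝓞 K ⧸ Ideal.span {(M : 𝓞 K)})] :
    ∑ r ∈ thIdx M, f (Ideal.Quotient.mk _ (((r.1 : ℤ) : 𝓞 K) + ((r.2 : ℤ) : 𝓞 K) * ζ)) =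
      2 * ∑ y, f y := by
  have hmk : ∀ x y : 𝓞 K, Ideal.Quotient.mk (Ideal.span {(M : 𝓞 K)}) x = Ideal.Quotient.mk _ y ↔
      (M : 𝓞 K) ∣ x - y := by
    intro x y
    rw [Ideal.Quotient.eq, Ideal.mem_span_singleton]
  have h1 : ∑ r ∈ Finset.range M ×ˢ Finset.range M,
      f (Ideal.Quotient.mk _ (((r.1 : ℤ) : 𝓞 K) + ((r.2 : ℤ) : 𝓞 K) * ζ)) = ∑ y, f y := by
    refine Finset.sum_bij (fun r _ => Ideal.Quotient.mk _ (((r.1 : ℤ) : 𝓞 K) + ((r.2 : ℤ) : 𝓞 K) * ζ))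
      (fun _ _ => Finset.mem_univ _) ?_ ?_ (fun _ _ => rfl)
    · rintro ⟨a, b⟩ hr ⟨a', b'⟩ hr' h
      rw [hmk] at h
      have e : (((a : ℤ) : 𝓞 K) + ((b : ℤ) : 𝓞 K) * ζ) - (((a' : ℤ) : 𝓞 K) + ((b' : ℤ) : 𝓞 K) * ζ) =
        (((a - a' : ℤ)) : 𝓞 K) + ((b - b' : ℤ) : 𝓞 K) * ζ := by push_cast; ring
      simp only at h
      rw [e, ← Int.cast_natCast (R := 𝓞 K) M] at h
      obtain ⟨⟨c, hc⟩, ⟨d, hd⟩⟩ := dvd_coord hζ h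
      simp only [Finset.mem_product, Finset.mem_range] at hr hr'
      have h3 : c = 0 := by
        have : c < 1 := by by_contra! h; nlinarith
        have : -1 < c := by by_contra! h; nlinarith
        omega
      have h4 : d = 0 := by
        have : d < 1 := by by_contra! h; nlinarith
        have : -1 < d := by by_contra! h; nlinarith
        omega
      subst h3 h4
      simp only [Prod.mk.injEq]
      omega
    · intro y _
      obtain ⟨x, rfl⟩ := Ideal.Quotient.mk_surjective y
      obtain ⟨⟨a, b⟩, rfl⟩ := (coord_bij hζ).2 x
      have hM' : (M : ℤ) ≠ 0 := by omega
      have hMp : (0 : ℤ) < M := by omega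
      have ha := Int.emod_nonneg a hM'
      have hb := Int.emod_nonneg b hM'
      have ha' := Int.emod_lt_of_pos a hMp
      have hb' := Int.emod_lt_of_pos b hMp
      refine ⟨((a % M).toNat, (b % M).toNat), ?_, ?_⟩
      · simp only [Finset.mem_product, Finset.mem_range]
        omega
      · rw [hmk]
        simp only [Int.toNat_of_nonneg ha, Int.toNat_of_nonneg hb]
        refine ⟨((-(a / M) : ℤ) : 𝓞 K) + ((-(b / M) : ℤ) : 𝓞 K) * ζ, ?_⟩
        have e1 : ((a % M : ℤ) : 𝓞 K) = (a : 𝓞 K) - M * ((a / M : ℤ) : 𝓞 K) := by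
          rw [Int.emod_def]; push_cast; ring
        have e2 : ((b % M : ℤ) : 𝓞 K) = (b : 𝓞 K) - M * ((b / M : ℤ) : 𝓞 K) := by
          rw [Int.emod_def]; push_cast; ring
        rw [e1, e2]
        push_cast
        ring
  rw [← h1, thIdx, Finset.sum_product, Finset.sum_product, Finset.mul_sum]
  refine Finset.sum_congr rfl fun a _ => ?_
  rw [two_mul, Finset.sum_range_add, two_mul]
  congr 1
  refine Finset.sum_congr rfl fun b _ => ?_
  congr 1
  rw [hmk]
  refine ⟨ζ, ?_⟩
  push_cast
  ring

lemma exists_H (M : ℕ) (hM : 1 < M) (J : Ideal (𝓞 K)) (hJ : J = Ideal.span {(M : 𝓞 K)})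
    [Nontrivial (𝓞 K ⧸ J)] [Finite (𝓞 K ⧸ J)] [IsPrincipalIdealRing (𝓞 K)]
    (η : Ray J →* ℂˣ) :
    ∃ H : ℂ → ℂ, Differentiable ℂ H ∧ H (-1) = 0 ∧ (η = 1 → H 1 ≠ 0) ∧ (η ≠ 1 → H 1 = 0) ∧
      ∀ s : ℂ, 1 < s.re → LSeriesHasSum (co ((ext0 η).comp (clm J))) s (H s / (s - 1)) := by
  have : Fintype (𝓞 K ⧸ J) := Fintype.ofFinite _
  have hu := units_finite hζ
  have hw : (Nat.card (𝓞 K)ˣ : ℂ) ≠ 0 := by exact_mod_cast Nat.card_pos.ne'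
  set φ : ℤ → ℤ → ℂ := fun a b => ext0 η (cbar J (Ideal.Quotient.mk J ((a : 𝓞 K) + (b : 𝓞 K) * ζ))) with hφ
  obtain ⟨H, hH, hm, ⟨κ, hκ, hres⟩, hsum⟩ := partA φ M (by omega)
    (by
      intro a b i j
      simp only [hφ]
      congr 2
      rw [Ideal.Quotient.eq, hJ, Ideal.mem_span_singleton]
      refine ⟨(i : 𝓞 K) + (j : 𝓞 K) * ζ, ?_⟩
      push_cast
      ring)
    (by simp [hφ]) (fun a b => ext0_norm_le _ _)
  have hbox : ∑ r ∈ thIdx M, φ r.1 r.2 = 2 * ∑ y, ext0 η (cbar J y) := by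
    subst hJ
    exact sum_box hζ M (by omega) (fun y => ext0 η (cbar _ y))
  refine ⟨fun s => H s / Nat.card (𝓞 K)ˣ, hH.div_const _, by simp [hm], ?_, ?_, ?_⟩
  · rintro rfl
    refine div_ne_zero ?_ hw
    rw [hres]
    refine mul_ne_zero hκ ?_
    have e : ∀ a b, φ a b = ((‖φ a b‖ : ℝ) : ℂ) := fun a b => ext0_norm _ _
    rw [Finset.sum_congr rfl (fun r _ => e r.1 r.2), ← Complex.ofReal_sum]
    have : 0 < ∑ r ∈ thIdx M, ‖φ r.1 r.2‖ := by
      refine Finset.sum_pos' (fun _ _ => norm_nonneg _) ⟨(1, 0), ?_, ?_⟩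
      · simp [thIdx]; omega
      · simp [hφ]
    exact_mod_cast this.ne'
  · intro hη
    have : ∑ r ∈ thIdx M, φ r.1 r.2 = 0 := by
      rw [hbox, sum_cbar J η hη, mul_zero]
    simp [hres, this]
  · intro s hs
    have hs0 : s ≠ 0 := by
      rintro rfl
      simp at hs
      linarith
    apply co_hasSum hs0
    rw [div_right_comm]
    refine ideal_hasSum _ (by rw [← Ideal.zero_eq_bot, map_zero, zero_div]) ?_ hu
    rw [← (coordE hζ).hasSum_iff]
    convert! hsum s hs using 2 with x
    simp only [Function.comp, coordE_apply, MonoidWithZeroHom.comp_apply, clm_span, hφ]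
    rw [← norm_coord hζ, Int.cast_natCast]

theorem exists_prime_mod (M : ℕ) (hM : 1 < M) (γ : 𝓞 K) (hγ : IsCoprime (M : 𝓞 K) γ) :
    ∃ p : 𝓞 K, Prime p ∧ (M : 𝓞 K) ∣ p - γ := by
  have : IsPrincipalIdealRing (𝓞 K) := IsCyclotomicExtension.Rat.three_pid K
  have hM0 : (M : 𝓞 K) ≠ 0 := by
    have : M ≠ 0 := by omega
    exact_mod_cast this
  set J := Ideal.span {(M : 𝓞 K)} with hJ
  have hfin : Finite (𝓞 K ⧸ J) := Ideal.finiteQuotientOfFreeOfNeBot J (by simpa [hJ] using hM0)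
  have hnt : Nontrivial (𝓞 K ⧸ J) := by
    apply Ideal.Quotient.nontrivial_iff.2
    intro h
    rw [hJ, Ideal.span_singleton_eq_top, isUnit_iff_dvd_one] at h
    have h2 := dvd_coord hζ (M := M) (a := 1) (b := 0) (by simpa using h)
    have := Int.le_of_dvd one_pos h2.1
    omega
  choose H hH hm h1 h0 hs using exists_H hζ M hM J hJ
  obtain ⟨x, y, hxy⟩ := hγ
  have hγu : IsUnit (Ideal.Quotient.mk J γ) := by
    refine IsUnit.of_mul_eq_one (Ideal.Quotient.mk J y) ?_
    rw [← map_mul, ← map_one (Ideal.Quotient.mk J), Ideal.Quotient.eq, hJ, Ideal.mem_span_singleton]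
    exact ⟨-x, by linear_combination hxy⟩
  obtain ⟨P, hP, hcl⟩ := exists_prime_class (idealSum hζ) (clm J) H hH hm (h1 1 rfl) h0 hs (rmk J hγu.unit)
  obtain ⟨π, rfl⟩ : ∃ x, P = Ideal.span {x} := ⟨_, (Ideal.span_singleton_generator P).symm⟩
  have hπ0 : π ≠ 0 := by
    rintro rfl
    exact hP.ne_zero (by simp)
  have hπ : Prime π := by
    rw [← Ideal.span_singleton_prime hπ0]
    exact (Ideal.prime_iff_isPrime (by simpa using hπ0)).1 hP
  rw [clm_span] at hcl
  have hπu : IsUnit (Ideal.Quotient.mk J π) := by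
    by_contra h
    rw [cbar_not J h] at hcl
    exact WithZero.coe_ne_zero hcl.symm
  have h3 := cbar_unit J hπu.unit
  rw [IsUnit.unit_spec, hcl, WithZero.coe_inj] at h3
  obtain ⟨u, hu⟩ := rmk_eq J h3.symm
  have h4 : hπu.unit * Units.map (Ideal.Quotient.mk J : 𝓞 K →* 𝓞 K ⧸ J) u = hγu.unit := by
    rw [hu, mul_inv_cancel_left]
  have h5 : Ideal.Quotient.mk J (π * u) = Ideal.Quotient.mk J γ := by
    have := congrArg Units.val h4
    simpa using this
  refine ⟨π * u, ?_, ?_⟩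
  · exact (associated_mul_unit_right π u u.isUnit).prime hπ
  · rwa [Ideal.Quotient.eq, hJ, Ideal.mem_span_singleton] at h5

end PartF

open NumberField in
theorem exists_primary_prime_congruent (K : Type*) [Field K] [NumberField K]
    [IsCyclotomicExtension {3} ℚ K]
    (ζ : 𝓞 K) (hζ : IsPrimitiveRoot ζ 3)
    (q : ℕ) (hq : q.Prime) (hq3 : q ≠ 3)
    (a b : ℤ) (α : 𝓞 K) (hα : α = (a : 𝓞 K) + (b : 𝓞 K) * ζ)
    (hcop : IsCoprime (q : 𝓞 K) α) :
    ∃ (lam : 𝓞 K) (a' b' : ℤ), lam = (a' : 𝓞 K) + (b' : 𝓞 K) * ζ ∧ (3 : ℤ) ∣ b' ∧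
      Prime lam ∧ (q : 𝓞 K) ∣ (lam - α) := by
  have hc : IsCoprime (q : ℤ) (3 : ℤ) := by
    have : Nat.Coprime q 3 := (Nat.coprime_primes hq Nat.prime_three).2 hq3
    exact_mod_cast Nat.isCoprime_iff_coprime.2 this
  obtain ⟨x, y, hxy⟩ := hc
  have hxy' : (x : 𝓞 K) * q + (y : 𝓞 K) * 3 = 1 := by exact_mod_cast congrArg (Int.cast (R := 𝓞 K)) hxy
  set γ : 𝓞 K := α * (y * 3) + x * q with hγ
  have h1 : IsCoprime (q : 𝓞 K) γ := by
    obtain ⟨s, t, hst⟩ := hcop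
    refine ⟨s - t * x * (1 - α), t, ?_⟩
    rw [hγ]
    linear_combination hst + t * α * hxy'
  have h2 : IsCoprime (3 : 𝓞 K) γ := by
    refine ⟨y * (1 - α), 1, ?_⟩
    rw [hγ]
    linear_combination hxy'
  have h3 : IsCoprime ((3 * q : ℕ) : 𝓞 K) γ := by
    push_cast
    exact h2.mul_left h1
  obtain ⟨p, hp, hd⟩ := exists_prime_mod hζ (3 * q) (by have := hq.two_le; omega) γ h3
  obtain ⟨⟨a', b'⟩, hab⟩ := (coord_bij hζ).2 p
  refine ⟨p, a', b', hab.symm, ?_, hp, ?_⟩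
  · have h4 : (3 : 𝓞 K) ∣ p - 1 := by
      have h5 : (3 : 𝓞 K) ∣ p - γ := (Dvd.intro (q : 𝓞 K) (by push_cast; ring)).trans hd
      have h6 : (3 : 𝓞 K) ∣ γ - 1 := ⟨y * (α - 1), by rw [hγ]; linear_combination hxy'⟩
      have := dvd_add h5 h6
      rwa [sub_add_sub_cancel] at this
    refine (dvd_coord hζ (M := 3) (a := a' - 1) (b := b') ?_).2
    have e : (((a' - 1 : ℤ)) : 𝓞 K) + (b' : 𝓞 K) * ζ = p - 1 := by
      rw [← hab]; push_cast; ring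
    rw [e]
    exact_mod_cast h4
  · have h5 : (q : 𝓞 K) ∣ p - γ := (Dvd.intro_left (3 : 𝓞 K) (by push_cast; ring)).trans hd
    have h6 : (q : 𝓞 K) ∣ γ - α := ⟨x * (1 - α), by rw [hγ]; linear_combination α * hxy'⟩
    have := dvd_add h5 h6
    rwa [sub_add_sub_cancel] at this
end
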